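/- arXiv:2403.16589 — 5 statements merged into one kernel-verified Lean document; each statement's English description precedes it below -/
import Mathlib

section
/- For every ε > 0 there exists n₀ such that for all n ≥ n₀, the number of sumsets in F₂ⁿ satisfies (1−ε)·(2ⁿ−1)·2^(2^(n−1)) ≤ |𝒮ₙ| ≤ (1+ε)·(2ⁿ−1)·2^(2^(n−1)). (That is, |𝒮ₙ| ~ (2ⁿ−1)·2^(2^(n−1)).) -/
open Pointwise

/-- `V n` is the vector space `F₂ⁿ`. -/
abbrev V (n : ℕ) : Type := Fin n → ZMod 2

/-- `𝒮ₙ`: the family of sumsets `A + A` for `A ⊆ F₂ⁿ`. -/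
def sumsets (n : ℕ) : Finset (Finset (V n)) :=
  Finset.image (fun A : Finset (V n) => A + A) Finset.univ

noncomputable section
namespace SC
open Finset

variable {n : ℕ}

lemma z2 (u : ZMod 2) : u = 0 ∨ u = 1 := by revert u; decide

lemma vadd_self (x : V n) : x + x = 0 := by
  funext i; have : ∀ u : ZMod 2, u + u = 0 := by decide
  exact this _

lemma vadd_eq_zero {x y : V n} : x + y = 0 ↔ y = x := by
  constructor
  · intro h
    have : x + (x + y) = x + 0 := by rw [h]
    rw [← add_assoc, vadd_self, zero_add, add_zero] at this
    exact this
  · rintro rfl; exact vadd_self _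

lemma vadd_cancel (x y : V n) : x + y + y = x := by
  rw [add_assoc, vadd_self, add_zero]

lemma cardV : Fintype.card (V n) = 2 ^ n := by simp [V, ZMod.card]

/-- characters -/
def chi (a x : V n) : ℝ := if a ⬝ᵥ x = 0 then 1 else -1

lemma chi_comm (a x : V n) : chi a x = chi x a := by
  unfold chi; rw [dotProduct_comm]

lemma chi_add (a x y : V n) : chi a (x + y) = chi a x * chi a y := by
  unfold chi; rw [dotProduct_add]
  rcases z2 (a ⬝ᵥ x) with h | h <;> rcases z2 (a ⬝ᵥ y) with h' | h' <;> rw [h, h'] <;> norm_num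
  decide

lemma chi_add_left (a b x : V n) : chi (a + b) x = chi a x * chi b x := by
  rw [chi_comm, chi_add, chi_comm x a, chi_comm x b]

lemma exists_dot {a : V n} (ha : a ≠ 0) : ∃ x, a ⬝ᵥ x = 1 := by
  obtain ⟨i, hi⟩ := Function.ne_iff.mp ha
  refine ⟨Pi.single i 1, ?_⟩
  rw [dotProduct_single, mul_one]
  exact (z2 _).resolve_left hi

lemma sum_chi (a : V n) : ∑ x, chi a x = if a = 0 then (2:ℝ) ^ n else 0 := by
  split_ifs with h
  · subst h; simp [chi]
  · obtain ⟨x, hx⟩ := exists_dot h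
    have h1 : ∑ y, chi a y = ∑ y, chi a (y + x) :=
      (Equiv.sum_comp (Equiv.addRight x) (fun y => chi a y)).symm
    have h2 : chi a x = -1 := by simp [chi, hx]
    simp only [chi_add, h2, mul_neg, mul_one, sum_neg_distrib] at h1
    linarith

lemma sum_chi' (x : V n) : ∑ a, chi a x = if x = 0 then (2:ℝ) ^ n else 0 := by
  rw [← sum_chi]; exact sum_congr rfl fun a _ => chi_comm _ _

def ft (f : V n → ℝ) (a : V n) : ℝ := ∑ x, f x * chi a x

lemma parseval (f : V n → ℝ) : ∑ a, ft f a ^ 2 = 2 ^ n * ∑ x, f x ^ 2 := by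
  have h1 : ∀ a, ft f a ^ 2 = ∑ x, ∑ y, f x * f y * chi a (x + y) := by
    intro a
    rw [sq, ft, sum_mul_sum]
    refine sum_congr rfl fun x _ => sum_congr rfl fun y _ => ?_
    rw [chi_add]; ring
  simp_rw [h1]
  rw [sum_comm, mul_sum]
  refine sum_congr rfl fun x _ => ?_
  rw [sum_comm]
  simp_rw [← mul_sum, sum_chi', vadd_eq_zero]
  simp
  ring

def T (f g h : V n → ℝ) : ℝ := ∑ x, ∑ y, f x * g y * h (x + y)

lemma triple (f g h : V n → ℝ) : ∑ a, ft f a * ft g a * ft h a = 2 ^ n * T f g h := by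
  have h1 : ∀ a, ft f a * ft g a * ft h a = ∑ x, ∑ y, ∑ z, f x * g y * h z * chi a (x + y + z) := by
    intro a
    rw [ft, ft, ft, sum_mul_sum, sum_mul]
    refine sum_congr rfl fun x _ => ?_
    rw [sum_mul]
    refine sum_congr rfl fun y _ => ?_
    rw [mul_sum]
    refine sum_congr rfl fun z _ => ?_
    rw [chi_add, chi_add]; ring
  simp_rw [h1]
  rw [sum_comm, T, mul_sum]
  refine sum_congr rfl fun x _ => ?_
  rw [sum_comm, mul_sum]
  refine sum_congr rfl fun y _ => ?_
  rw [sum_comm]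
  simp_rw [← mul_sum, sum_chi', vadd_eq_zero]
  simp
  ring

def ind (A : Finset (V n)) (x : V n) : ℝ := if x ∈ A then 1 else 0

lemma ind_nonneg (A : Finset (V n)) (x : V n) : 0 ≤ ind A x := by
  unfold ind; split_ifs <;> norm_num

lemma ind_le_one (A : Finset (V n)) (x : V n) : ind A x ≤ 1 := by
  unfold ind; split_ifs <;> norm_num

lemma sum_ind (A : Finset (V n)) : ∑ x, ind A x = #A := by
  simp [ind]

lemma sum_ind_sq (A : Finset (V n)) : ∑ x, ind A x ^ 2 = #A := by
  simp [ind]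

lemma card_le (A : Finset (V n)) : (#A : ℝ) ≤ 2 ^ n := by
  have := card_le_univ A
  rw [cardV] at this
  exact_mod_cast this

section fibers
variable {m : ℕ} (lam : Fin m → V n)

def phi (x : V n) : Fin m → ZMod 2 := fun i => lam i ⬝ᵥ x

lemma phi_add (x y : V n) : phi lam (x + y) = phi lam x + phi lam y := by
  funext i; simp [phi, dotProduct_add]

def ker : Finset (V n) := univ.filter fun x => phi lam x = 0

def pre (P : Finset (Fin m → ZMod 2)) : Finset (V n) := univ.filter fun x => phi lam x ∈ P

def avg (f : V n → ℝ) (x : V n) : ℝ := ∑ v ∈ ker lam, f (x + v)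

lemma ker_pos : (0:ℝ) < #(ker lam) := by
  have : (0 : V n) ∈ ker lam := by
    simp only [ker, mem_filter, mem_univ, true_and]; funext i; simp [phi]
  exact_mod_cast card_pos.mpr ⟨_, this⟩

lemma ker_add {x y : V n} (hx : x ∈ ker lam) (hy : y ∈ ker lam) : x + y ∈ ker lam := by
  simp only [ker, mem_filter, mem_univ, true_and] at *
  rw [phi_add, hx, hy, add_zero]

lemma phi_eq_iff {x y : V n} : phi lam x = phi lam y ↔ x + y ∈ ker lam := by
  simp only [ker, mem_filter, mem_univ, true_and, phi_add]
  exact (vadd_eq_zero (n := m)).symm.trans ⟨fun h => by rw [add_comm]; exact h, fun h => by rw [add_comm]; exact h⟩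

lemma avg_congr (f : V n → ℝ) {x y : V n} (h : phi lam x = phi lam y) : avg lam f x = avg lam f y := by
  have hk := (phi_eq_iff lam).1 h
  unfold avg
  refine sum_bij' (fun v _ => v + (x + y)) (fun v _ => v + (x + y)) ?_ ?_ ?_ ?_ ?_
  · intro v hv; exact ker_add lam hv hk
  · intro v hv; exact ker_add lam hv hk
  · intro v _; exact vadd_cancel _ _
  · intro v _; exact vadd_cancel _ _
  · intro v _
    congr 1
    have : y + (v + (x + y)) = x + v + y + y := by abel
    rw [this, vadd_cancel]

lemma ft_avg (f : V n → ℝ) (a : V n) : ft (avg lam f) a = ft f a * ∑ v ∈ ker lam, chi a v := by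
  unfold ft avg
  simp_rw [sum_mul]
  rw [sum_comm, sum_comm]
  simp_rw [mul_sum]
  rw [sum_comm]
  conv_rhs => rw [sum_comm]
  refine sum_congr rfl fun v _ => ?_
  rw [← Equiv.sum_comp (Equiv.addRight v)]
  refine sum_congr rfl fun x _ => ?_
  simp only [Equiv.coe_addRight]
  rw [vadd_cancel, chi_add]; ring

lemma sum_ker (a : V n) : (∑ v ∈ ker lam, chi a v = #(ker lam)) ∨
    (∑ v ∈ ker lam, chi a v = 0 ∧ ∀ i, lam i ≠ a) := by
  by_cases h : ∀ v ∈ ker lam, chi a v = 1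
  · left; rw [sum_congr rfl h]; simp
  · right
    push Not at h
    obtain ⟨w, hw, hw1⟩ := h
    have hw2 : chi a w = -1 := by
      unfold chi at *; split_ifs at * <;> simp_all
    constructor
    · have h1 : ∑ v ∈ ker lam, chi a v = ∑ v ∈ ker lam, chi a (v + w) := by
        refine sum_bij' (fun v _ => v + w) (fun v _ => v + w) ?_ ?_ ?_ ?_ ?_
        · intro v hv; exact ker_add lam hv hw
        · intro v hv; exact ker_add lam hv hw
        · intro v _; exact vadd_cancel _ _
        · intro v _; exact vadd_cancel _ _
        · intro v _; rw [vadd_cancel]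
      simp only [chi_add, hw2, mul_neg, mul_one, sum_neg_distrib] at h1
      linarith
    · rintro i rfl
      simp only [ker, mem_filter, mem_univ, true_and] at hw
      have := congrFun hw i
      simp only [phi, Pi.zero_apply] at this
      simp [chi, this] at hw1

def bigP (A : Finset (V n)) (δ : ℝ) : Finset (Fin m → ZMod 2) :=
  (univ.filter fun x => δ * #(ker lam) ≤ avg lam (ind A) x).image (phi lam)

lemma mem_pre_bigP (A : Finset (V n)) (δ : ℝ) (x : V n) :
    x ∈ pre lam (bigP lam A δ) ↔ δ * #(ker lam) ≤ avg lam (ind A) x := by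
  simp only [pre, bigP, mem_filter, mem_univ, true_and, mem_image]
  constructor
  · rintro ⟨y, hy, hxy⟩
    rwa [← avg_congr lam _ hxy]
  · intro h; exact ⟨x, h, rfl⟩

lemma avg_nonneg (A : Finset (V n)) (x : V n) : 0 ≤ avg lam (ind A) x :=
  sum_nonneg fun _ _ => ind_nonneg _ _

lemma leftover (A : Finset (V n)) {δ : ℝ} (hδ : 0 < δ) :
    (#(A \ pre lam (bigP lam A δ)) : ℝ) ≤ δ * 2 ^ n := by
  set B := A \ pre lam (bigP lam A δ) with hB
  have hk := ker_pos lam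
  have h1 : ∑ x, avg lam (ind B) x = #(ker lam) * #B := by
    unfold avg
    rw [sum_comm]
    have : ∀ v ∈ ker lam, ∑ x, ind B (x + v) = #B := by
      intro v _
      rw [← sum_ind B]
      exact Equiv.sum_comp (Equiv.addRight v) (fun x => ind B x)
    rw [sum_congr rfl this]; simp
  have h2 : ∀ x, avg lam (ind B) x ≤ δ * #(ker lam) := by
    intro x
    by_cases hx : δ * #(ker lam) ≤ avg lam (ind A) x
    · have : avg lam (ind B) x = 0 := by
        unfold avg
        refine sum_eq_zero fun v hv => ?_
        have : x + v ∉ B := by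
          rw [hB, mem_sdiff, mem_pre_bigP]
          rintro ⟨_, h⟩
          apply h
          rwa [avg_congr lam (ind A) (x := x + v) (y := x)]
          rw [phi_eq_iff, add_comm x v, vadd_cancel]; exact hv
        simp [ind, this]
      rw [this]; positivity
    · push Not at hx
      refine le_trans (sum_le_sum fun v _ => ?_) hx.le
      unfold ind
      split_ifs with h1 h2
      · exact le_rfl
      · exact absurd (mem_sdiff.1 h1).1 h2
      · norm_num
      · exact le_rfl
  have h3 : ∑ x, avg lam (ind B) x ≤ ∑ x : V n, δ * #(ker lam) := sum_le_sum fun x _ => h2 x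
  rw [h1, sum_const, card_univ, cardV, nsmul_eq_mul] at h3
  push_cast at h3
  nlinarith

end fibers

lemma T_avg {m : ℕ} (lam : Fin m → V n) (A C : Finset (V n)) {η : ℝ} (hη : 0 < η)
    (h0 : T (ind A) (ind A) (ind C) = 0)
    (hl : ∀ a, η * 2 ^ n < |ft (ind A) a| → ∃ i, lam i = a) :
    T (avg lam (ind A)) (avg lam (ind A)) (avg lam (ind C)) ≤ η * (2 ^ n) ^ 2 * (#(ker lam)) ^ 3 := by
  have hN : (0:ℝ) < 2 ^ n := by positivity
  have hk := ker_pos lam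
  set k : ℝ := ((#(ker lam) : ℕ) : ℝ) with hkdef
  have key : ∀ a, ft (avg lam (ind A)) a * ft (avg lam (ind A)) a * ft (avg lam (ind C)) a ≤
      k ^ 3 * (ft (ind A) a * ft (ind A) a * ft (ind C) a +
        η * 2 ^ n * (ft (ind A) a ^ 2 + ft (ind C) a ^ 2) / 2) := by
    intro a
    rw [ft_avg, ft_avg]
    rcases sum_ker lam a with h | ⟨h, h'⟩
    · rw [h, ← hkdef]
      have : 0 ≤ k ^ 3 * (η * 2 ^ n * (ft (ind A) a ^ 2 + ft (ind C) a ^ 2) / 2) := by positivity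
      linarith
    · rw [h]
      have hb : |ft (ind A) a| ≤ η * 2 ^ n := by
        by_contra hc
        push Not at hc
        obtain ⟨i, hi⟩ := hl a hc
        exact h' i hi
      simp only [mul_zero]
      apply mul_nonneg (by positivity)
      set u := ft (ind A) a
      set w := ft (ind C) a
      have h1 : |u * u * w| ≤ η * 2 ^ n * (|u| * |w|) := by
        rw [abs_mul, abs_mul, mul_assoc]
        exact mul_le_mul_of_nonneg_right hb (by positivity)
      have h2 : |u| * |w| ≤ (u ^ 2 + w ^ 2) / 2 := by
        nlinarith [sq_nonneg (|u| - |w|), sq_abs u, sq_abs w]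
      have h3 := neg_abs_le (u * u * w)
      have h4 := mul_le_mul_of_nonneg_left h2 (by positivity : 0 ≤ η * 2 ^ n)
      linarith
  have h1 := sum_le_sum fun a (_ : a ∈ (univ : Finset (V n))) => key a
  rw [triple, ← mul_sum, sum_add_distrib, triple, h0, ← sum_div, ← mul_sum, sum_add_distrib,
    parseval, parseval, sum_ind_sq, sum_ind_sq] at h1
  have hA := card_le A
  have hC := card_le C
  have h2 : k ^ 3 * (2 ^ n * 0 + η * 2 ^ n * (2 ^ n * (#A:ℝ) + 2 ^ n * (#C:ℝ)) / 2) ≤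
      2 ^ n * (η * (2 ^ n) ^ 2 * k ^ 3) := by
    have : (2 ^ n * (#A:ℝ) + 2 ^ n * (#C:ℝ)) / 2 ≤ 2 ^ n * 2 ^ n := by nlinarith
    have h5 := mul_le_mul_of_nonneg_left this (by positivity : 0 ≤ k ^ 3 * (η * 2 ^ n))
    linarith
  exact le_of_mul_le_mul_left (h1.trans h2) hN

lemma mul3_le {c x y z x' y' z' : ℝ} (hc : 0 ≤ c) (hx : 0 ≤ x) (hy : 0 ≤ y) (hz : 0 ≤ z)
    (h1 : c * x ≤ x') (h2 : c * y ≤ y') (h3 : c * z ≤ z') : c ^ 3 * (x * y * z) ≤ x' * y' * z' := by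
  have hx' : 0 ≤ x' := le_trans (by positivity) h1
  have hy' : 0 ≤ y' := le_trans (by positivity) h2
  calc c ^ 3 * (x * y * z) = (c * x) * (c * y) * (c * z) := by ring
    _ ≤ _ := mul_le_mul (mul_le_mul h1 h2 (by positivity) hx') h3 (by positivity) (by positivity)

lemma container (δ θ : ℝ) (hδ : 0 < δ) (hθ : 0 < θ) : ∃ m : ℕ, ∀ (n : ℕ) (A C : Finset (V n)),
    (∀ a ∈ A, ∀ b ∈ A, a + b ∉ C) → ∃ (lam : Fin m → V n) (P Q : Finset (Fin m → ZMod 2)),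
      (#(A \ pre lam P) : ℝ) ≤ δ * 2 ^ n ∧ (#(C \ pre lam Q) : ℝ) ≤ δ * 2 ^ n ∧
      T (ind (pre lam P)) (ind (pre lam P)) (ind (pre lam Q)) ≤ θ * (2 ^ n) ^ 2 := by
  set η := θ * δ ^ 3 with hη
  have hη0 : 0 < η := by positivity
  refine ⟨⌈1 / η ^ 2⌉₊, fun n A C hAC => ?_⟩
  have hN : (0:ℝ) < 2 ^ n := by positivity
  set m := ⌈1 / η ^ 2⌉₊
  have h0 : T (ind A) (ind A) (ind C) = 0 := by
    refine sum_eq_zero fun x _ => sum_eq_zero fun y _ => ?_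
    unfold ind
    split_ifs with h1 h2 h3 <;> first | exact absurd h3 (hAC _ h1 _ h2) | simp
  set L := (univ : Finset (V n)).filter fun a => η * 2 ^ n < |ft (ind A) a| with hL
  have hLc : #L ≤ m := by
    have h1 : ∑ a ∈ L, (η * 2 ^ n) ^ 2 ≤ ∑ a, ft (ind A) a ^ 2 := by
      refine le_trans (sum_le_sum fun a ha => ?_)
        (sum_le_sum_of_subset_of_nonneg (subset_univ L) fun _ _ _ => sq_nonneg _)
      rw [← sq_abs (ft _ _)]
      exact pow_le_pow_left₀ (by positivity) (mem_filter.1 ha).2.le 2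
    rw [parseval, sum_ind_sq, sum_const, nsmul_eq_mul] at h1
    have hA := card_le A
    have h2 : (#L : ℝ) * η ^ 2 ≤ 1 := by
      have : (#L : ℝ) * η ^ 2 * (2 ^ n) ^ 2 ≤ 1 * (2 ^ n) ^ 2 := by nlinarith
      exact le_of_mul_le_mul_right this (by positivity)
    have h3 : (#L : ℝ) ≤ 1 / η ^ 2 := by rwa [le_div_iff₀ (by positivity)]
    exact_mod_cast h3.trans (Nat.le_ceil _)
  obtain ⟨lam, hlam⟩ : ∃ lam : Fin m → V n, ∀ a ∈ L, ∃ i, lam i = a := by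
    refine ⟨fun i => if h : (i : ℕ) < #L then (L.equivFin.symm ⟨i, h⟩ : V n) else 0, fun a ha => ?_⟩
    refine ⟨⟨L.equivFin ⟨a, ha⟩, (L.equivFin ⟨a, ha⟩).2.trans_le hLc⟩, ?_⟩
    simp
  have hT := T_avg lam A C hη0 h0 (fun a ha => hlam a (by simp [hL, ha]))
  refine ⟨lam, bigP lam A δ, bigP lam C δ, leftover lam A hδ, leftover lam C hδ, ?_⟩
  have hk := ker_pos lam
  set k : ℝ := ((#(ker lam) : ℕ) : ℝ) with hkdef
  have hpt : ∀ (B : Finset (V n)) x, δ * k * ind (pre lam (bigP lam B δ)) x ≤ avg lam (ind B) x := by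
    intro B x
    unfold ind
    split_ifs with h
    · rw [mul_one]; exact (mem_pre_bigP lam B δ x).1 h
    · rw [mul_zero]; exact avg_nonneg lam B x
  have h2 : (δ * k) ^ 3 * T (ind (pre lam (bigP lam A δ))) (ind (pre lam (bigP lam A δ)))
      (ind (pre lam (bigP lam C δ))) ≤
      T (avg lam (ind A)) (avg lam (ind A)) (avg lam (ind C)) := by
    unfold T
    rw [mul_sum]
    refine sum_le_sum fun x _ => ?_
    rw [mul_sum]
    refine sum_le_sum fun y _ => ?_
    have e1 := hpt A x
    have e2 := hpt A y
    have e3 := hpt C (x + y)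
    have i1 := ind_nonneg (pre lam (bigP lam A δ)) x
    have i2 := ind_nonneg (pre lam (bigP lam A δ)) y
    have i3 := ind_nonneg (pre lam (bigP lam C δ)) (x + y)
    exact mul3_le (mul_pos hδ hk).le i1 i2 i3 e1 e2 e3
  have h3 := h2.trans hT
  have h4 : (δ * k) ^ 3 * T (ind (pre lam (bigP lam A δ))) (ind (pre lam (bigP lam A δ)))
      (ind (pre lam (bigP lam C δ))) ≤ (δ * k) ^ 3 * (θ * (2 ^ n) ^ 2) := by
    refine h3.trans (le_of_eq ?_); rw [hη]; ring
  exact le_of_mul_le_mul_left h4 (by positivity)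

def hyp (a : V n) (b : ZMod 2) : Finset (V n) := univ.filter fun x => a ⬝ᵥ x = b

lemma mem_hyp {a x : V n} {b : ZMod 2} : x ∈ hyp a b ↔ a ⬝ᵥ x = b := by simp [hyp]

lemma ft_zero (f : V n → ℝ) : ft f 0 = ∑ x, f x := by simp [ft, chi]

lemma card_hyp_real (A : Finset (V n)) (a : V n) (b : ZMod 2) :
    (#(A ∩ hyp a b) : ℝ) = (#A + (if b = 0 then 1 else -1) * ft (ind A) a) / 2 := by
  rw [← sum_ind, ← sum_ind, ft, mul_sum, ← sum_add_distrib, sum_div]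
  refine sum_congr rfl fun x _ => ?_
  simp only [ind, chi, mem_inter, mem_hyp]
  rcases z2 b with rfl | rfl <;> rcases z2 (a ⬝ᵥ x) with h | h <;> by_cases hx : x ∈ A <;>
    simp [h, hx]

lemma card_hyp {a : V n} (ha : a ≠ 0) (b : ZMod 2) : 2 * #(hyp a b) = 2 ^ n := by
  have h := card_hyp_real univ a b
  have h1 : ft (ind (univ : Finset (V n))) a = 0 := by
    have := sum_chi a
    rw [if_neg ha] at this
    simpa [ft, ind] using this
  rw [h1, univ_inter, card_univ, cardV] at h
  push_cast at h
  have : (2 : ℝ) * #(hyp a b) = 2 ^ n := by linarith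
  exact_mod_cast this

lemma struct (A C : Finset (V n)) (hA : (4995 / 10000 : ℝ) * 2 ^ n ≤ #A)
    (hC : (4995 / 10000 : ℝ) * 2 ^ n ≤ #C)
    (hT : T (ind A) (ind A) (ind C) ≤ 1 / 100000 * (2 ^ n) ^ 2) :
    ∃ a : V n, a ≠ 0 ∧ ∃ b, (#(A ∩ hyp a b) : ℝ) ≤ 1 / 260 * 2 ^ n := by
  have hN : (0:ℝ) < 2 ^ n := by positivity
  obtain ⟨a, ha, hca⟩ : ∃ a : V n, a ≠ 0 ∧ ft (ind C) a ≤ - ((1 / 2 - 1 / 600) * 2 ^ n) := by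
    by_contra! hcon
    have key : ∀ a, - ((1 / 2 - 1 / 600) * 2 ^ n) * ft (ind A) a ^ 2 +
        (if a = 0 then (#A : ℝ) ^ 2 * #C + (1 / 2 - 1 / 600) * 2 ^ n * (#A : ℝ) ^ 2 else 0) ≤
        ft (ind A) a * ft (ind A) a * ft (ind C) a := by
      intro a
      split_ifs with h
      · subst h
        rw [ft_zero, ft_zero, sum_ind, sum_ind]
        linarith
      · have := hcon a h
        nlinarith [mul_le_mul_of_nonneg_left this.le (sq_nonneg (ft (ind A) a))]
    have h1 := sum_le_sum fun a (_ : a ∈ (univ : Finset (V n))) => key a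
    rw [triple, sum_add_distrib, ← mul_sum, parseval, sum_ind_sq] at h1
    simp only [sum_ite_eq', mem_univ, if_true] at h1
    have h2 := mul_le_mul_of_nonneg_left hT hN.le
    set N : ℝ := 2 ^ n
    have h3 : (#A : ℝ) * (N - #A) ≤ N ^ 2 / 4 := by nlinarith [sq_nonneg ((#A : ℝ) - N / 2)]
    have h4 := mul_le_mul_of_nonneg_left h3 (by positivity : 0 ≤ (1 / 2 - 1 / 600 : ℝ) * N)
    have h5 : (4995 / 10000 * N) ^ 2 * (4995 / 10000 * N) ≤ (#A : ℝ) ^ 2 * #C :=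
      mul_le_mul (pow_le_pow_left₀ (by positivity) hA 2) hC (by positivity) (by positivity)
    have h6 : 0 < N ^ 3 := by positivity
    nlinarith
  refine ⟨a, ha, ?_⟩
  have hw : ∑ z : V n, (1 - chi a z) / 2 * (1 - ind C z) ≤ 1 / 600 * 2 ^ n := by
    have e : ∑ z : V n, (1 - chi a z) / 2 * (1 - ind C z) =
        (2 ^ n - ∑ z, chi a z - ∑ z, ind C z + ft (ind C) a) / 2 := by
      have : (2:ℝ) ^ n = ∑ z : V n, 1 := by simp
      rw [this, ft, ← sum_sub_distrib, ← sum_sub_distrib, ← sum_add_distrib, sum_div]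
      refine sum_congr rfl fun z _ => ?_
      ring
    rw [e, sum_chi, if_neg ha, sum_ind]
    have h0 := card_hyp_real C a 0
    simp only [if_true] at h0
    have : (0:ℝ) ≤ #(C ∩ hyp a 0) := by positivity
    linarith
  have hpt : ∀ x y, ind A x * ind A y * ((1 - chi a x * chi a y) / 2) ≤
      ind A x * ind A y * ind C (x + y) + (1 - chi a (x + y)) / 2 * (1 - ind C (x + y)) := by
    intro x y
    rw [chi_add]
    have hc : 0 ≤ (1 - chi a x * chi a y) / 2 ∧ (1 - chi a x * chi a y) / 2 ≤ 1 := by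
      unfold chi; split_ifs <;> norm_num
    unfold ind
    split_ifs <;> simp <;> linarith
  have h1 := sum_le_sum fun x (_ : x ∈ (univ : Finset (V n))) =>
    sum_le_sum fun y (_ : y ∈ (univ : Finset (V n))) => hpt x y
  simp_rw [sum_add_distrib] at h1
  have e1 : ∑ x, ∑ y, ind A x * ind A y * ((1 - chi a x * chi a y) / 2) =
      ((#A : ℝ) ^ 2 - ft (ind A) a ^ 2) / 2 := by
    rw [← sum_ind A, sq, sq, ft, sum_mul_sum, sum_mul_sum, ← sum_sub_distrib, sum_div]
    refine sum_congr rfl fun x _ => ?_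
    rw [← sum_sub_distrib, sum_div]
    refine sum_congr rfl fun y _ => ?_
    ring
  have e2 : ∑ x : V n, ∑ y, (1 - chi a (x + y)) / 2 * (1 - ind C (x + y)) =
      2 ^ n * ∑ z : V n, (1 - chi a z) / 2 * (1 - ind C z) := by
    have : ∀ x : V n, ∑ y, (1 - chi a (x + y)) / 2 * (1 - ind C (x + y)) =
        ∑ z : V n, (1 - chi a z) / 2 * (1 - ind C z) := fun x =>
      Equiv.sum_comp (Equiv.addLeft x) (fun z => (1 - chi a z) / 2 * (1 - ind C z))
    simp_rw [this]
    simp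
  rw [e1, e2] at h1
  have h2 := mul_le_mul_of_nonneg_left hw hN.le
  have h3 : ((#A : ℝ) ^ 2 - ft (ind A) a ^ 2) / 2 ≤ 1 / 100000 * (2 ^ n) ^ 2 + 2 ^ n * (1 / 600 * 2 ^ n) := by
    unfold T at hT; linarith
  have g0 := card_hyp_real A a 0
  have g1 := card_hyp_real A a 1
  simp only [if_true, one_ne_zero, if_false] at g0 g1
  by_contra! hcon
  have c0 := hcon 0
  have c1 := hcon 1
  set N : ℝ := 2 ^ n
  have h4 : ((#A : ℝ) ^ 2 - ft (ind A) a ^ 2) / 2 = 2 * (#(A ∩ hyp a 0) * #(A ∩ hyp a 1)) := by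
    rw [g0, g1]; ring
  have h5 : (#(A ∩ hyp a 0) : ℝ) + #(A ∩ hyp a 1) = #A := by rw [g0, g1]; ring
  rw [h4] at h3
  set u : ℝ := ((#(A ∩ hyp a 0) : ℕ) : ℝ)
  set w : ℝ := ((#(A ∩ hyp a 1) : ℕ) : ℝ)
  rcases le_total u w with h | h
  · have : 1 / 260 * N * (24 / 100 * N) ≤ u * w := mul_le_mul c0.le (by linarith) (by positivity) (by positivity)
    nlinarith
  · have : (24 / 100 * N) * (1 / 260 * N) ≤ u * w := mul_le_mul (by linarith) c1.le (by positivity) (by positivity)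
    nlinarith

lemma card_small (s : ℕ) (d : ℝ) :
    (#((univ : Finset (Finset (V n))).filter fun B => (#B : ℝ) ≤ d * 2 ^ n) : ℝ) ≤
      Real.exp ((1 / 2 ^ s + 7 / 10 * s * d) * 2 ^ n) := by
  set F := (univ : Finset (Finset (V n))).filter fun B => (#B : ℝ) ≤ d * 2 ^ n with hF
  set x : ℝ := 1 / 2 ^ s with hx
  have hx0 : 0 < x := by positivity
  have h1 : ∑ B : Finset (V n), x ^ #B = (x + 1) ^ (2 ^ n) := by
    have := sum_pow_mul_eq_add_pow x 1 (univ : Finset (V n))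
    rw [powerset_univ, card_univ, cardV] at this
    simpa using this
  have hlx : x = Real.exp (-(s * Real.log 2)) := by
    rw [Real.exp_neg, Real.exp_nat_mul, Real.exp_log (by norm_num), hx, one_div]
  have h2 : ∀ B ∈ F, Real.exp (-(7 / 10 * s * d * 2 ^ n)) ≤ x ^ #B := by
    intro B hB
    rw [hlx, ← Real.exp_nat_mul, Real.exp_le_exp]
    have hB' := (mem_filter.1 hB).2
    have l1 := Real.log_two_lt_d9
    have l2 := Real.log_two_gt_d9
    have : s * Real.log 2 * #B ≤ s * (7 / 10) * (d * 2 ^ n) :=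
      mul_le_mul (mul_le_mul_of_nonneg_left (by linarith) (by positivity)) hB' (by positivity) (by positivity)
    linarith
  have h3 : #F * Real.exp (-(7 / 10 * s * d * 2 ^ n)) ≤ (x + 1) ^ (2 ^ n) := by
    rw [← h1, ← nsmul_eq_mul, ← sum_const]
    exact (sum_le_sum h2).trans (sum_le_sum_of_subset_of_nonneg (subset_univ _) fun _ _ _ => by positivity)
  have h4 : (x + 1) ^ (2 ^ n) ≤ Real.exp (x * 2 ^ n) := by
    have : x * 2 ^ n = ((2 ^ n : ℕ) : ℝ) * x := by push_cast; ring
    rw [this, Real.exp_nat_mul]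
    exact pow_le_pow_left₀ (by positivity) (Real.add_one_le_exp x) _
  have h5 := h3.trans h4
  rw [Real.exp_neg, ← div_eq_mul_inv, div_le_iff₀ (Real.exp_pos _), ← Real.exp_add] at h5
  refine h5.trans (le_of_eq ?_)
  congr 1; ring

/-- counting sets by splitting -/
lemma card_split (X : Finset (V n)) (p : Finset (V n) → Prop) (q : Finset (V n) → Prop)
    [DecidablePred p] [DecidablePred q] (F : Finset (Finset (V n)))
    (h : ∀ A ∈ F, p (A ∩ X) ∧ q (A \ X)) :
    #F ≤ #(X.powerset.filter p) * #(univ.filter q) := by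
  rw [← card_product]
  refine card_le_card_of_injOn (fun A => (A ∩ X, A \ X)) ?_ ?_
  · intro A hA
    have := h A hA
    simp [this.1, this.2, inter_subset_right]
  · intro A _ B _ hAB
    simp only [Prod.mk.injEq] at hAB
    rw [← sdiff_union_inter A X, ← sdiff_union_inter B X, hAB.1, hAB.2]

def free (x : V n) (B : Finset (V n)) : Prop := ∀ y ∈ B, y + x ∉ B

lemma three_le : (3:ℝ) ≤ Real.exp (11 / 10) := by
  have h1 := Real.exp_one_gt_d9
  have h2 : (1:ℝ) + 1/10 + 1/200 ≤ Real.exp (1/10) := by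
    have := Real.quadratic_le_exp_of_nonneg (x := 1/10) (by norm_num)
    norm_num at this ⊢; linarith
  have : (11/10 : ℝ) = 1 + 1/10 := by norm_num
  rw [this, Real.exp_add]
  nlinarith

open Classical in
lemma card_free {a x : V n} (ha : a ≠ 0) (hx : x ≠ 0) (hax : a ⬝ᵥ x = 0) (b : ZMod 2) :
    (#((hyp a b).powerset.filter (free x)) : ℝ) ≤ Real.exp (275 / 1000 * 2 ^ n) := by
  obtain ⟨i, hi⟩ := Function.ne_iff.mp hx
  replace hi : x i = 1 := (z2 _).resolve_left hi
  set Y := (hyp a b).filter fun y => y i = 0 with hY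
  set Y1 := (hyp a b).filter fun y => ¬ y i = 0 with hY1
  have ez : ∀ u : ZMod 2, u ≠ 0 → u + 1 = 0 := by decide
  have hYY : #Y = #Y1 := by
    refine card_bij' (fun y _ => y + x) (fun y _ => y + x) ?_ ?_ ?_ ?_
    · intro y hy
      simp only [hY, hY1, mem_filter, mem_hyp, dotProduct_add, hax, add_zero, Pi.add_apply, hi] at hy ⊢
      exact ⟨hy.1, by rw [hy.2]; decide⟩
    · intro y hy
      simp only [hY, hY1, mem_filter, mem_hyp, dotProduct_add, hax, add_zero, Pi.add_apply, hi] at hy ⊢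
      exact ⟨hy.1, ez _ hy.2⟩
    · intro y _; exact vadd_cancel _ _
    · intro y _; exact vadd_cancel _ _
  have hYc : 4 * #Y = 2 ^ n := by
    have h1 : #Y + #Y1 = #(hyp a b) := by
      rw [hY, hY1]
      convert card_filter_add_card_filter_not (s := hyp a b) (fun y : V n => y i = 0)
    have h2 := card_hyp ha b
    omega
  have hle : #((hyp a b).powerset.filter (free x)) ≤ 3 ^ #Y := by
    have hc : Fintype.card (Y → Fin 3) = 3 ^ #Y := by simp
    rw [← hc, ← card_univ]
    let f : Finset (V n) → (Y → Fin 3) := fun B y => if (y : V n) ∈ B then 0 else if (y : V n) + x ∈ B then 1 else 2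
    refine card_le_card_of_injOn f (fun _ _ => mem_univ _) ?_
    have key : ∀ B B' : Finset (V n), B ⊆ hyp a b → free x B → f B = f B' → B ⊆ B' := by
      intro B B' hB hf hff z hz
      have hzb := mem_hyp.1 (hB hz)
      by_cases hzi : z i = 0
      · have hzY : z ∈ Y := by simp [hY, mem_hyp, hzb, hzi]
        have := congrFun hff ⟨z, hzY⟩
        simp only [f, hz, if_true] at this
        by_contra hcon
        rw [if_neg hcon] at this
        split_ifs at this <;> revert this <;> decide
      · have hzY : z + x ∈ Y := by
          simp only [hY, mem_filter, mem_hyp, dotProduct_add, hax, add_zero, Pi.add_apply, hi]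
          exact ⟨hzb, ez _ hzi⟩
        have := congrFun hff ⟨z + x, hzY⟩
        simp only [f, hf z hz, if_false, vadd_cancel, hz, if_true] at this
        by_contra hcon
        rw [if_neg hcon] at this
        split_ifs at this <;> revert this <;> decide
    intro B hB B' hB' hff
    simp only [mem_coe, mem_filter, mem_powerset] at hB hB'
    exact (key B B' hB.1 hB.2 hff).antisymm (key B' B hB'.1 hB'.2 hff.symm)
  calc (#((hyp a b).powerset.filter (free x)) : ℝ) ≤ 3 ^ #Y := by exact_mod_cast hle
    _ ≤ Real.exp (11/10) ^ #Y := pow_le_pow_left₀ (by norm_num) three_le _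
    _ = Real.exp (275 / 1000 * 2 ^ n) := by
      rw [← Real.exp_nat_mul]
      congr 1
      have : (4:ℝ) * #Y = 2 ^ n := by exact_mod_cast hYc
      linarith

open Classical in
lemma card_bad1_aux (Z : Finset (V n)) (hZ : (#Z : ℝ) ≤ 4995 / 10000 * 2 ^ n) :
    (#((univ : Finset (Finset (V n))).filter fun A => (#(A \ Z) : ℝ) ≤ 1 / 100000 * 2 ^ n) : ℝ) ≤
      Real.exp ((Real.log 2 / 2 - 1 / 10000) * 2 ^ n) := by
  have h1 := card_split Z (fun _ => True) (fun B => (#B : ℝ) ≤ 1 / 100000 * 2 ^ n)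
    ((univ : Finset (Finset (V n))).filter fun A => (#(A \ Z) : ℝ) ≤ 1 / 100000 * 2 ^ n)
    (fun A hA => ⟨trivial, (mem_filter.1 hA).2⟩)
  have h2 := card_small (n := n) 14 (1 / 100000)
  have h3 : ((#(Z.powerset.filter fun _ => True) : ℕ) : ℝ) ≤ Real.exp (Real.log 2 * (4995 / 10000 * 2 ^ n)) := by
    simp only [filter_true, card_powerset]
    push_cast
    calc (2:ℝ) ^ #Z = Real.exp (Real.log 2 * #Z) := by
          rw [mul_comm, Real.exp_nat_mul, Real.exp_log (by norm_num)]
      _ ≤ _ := Real.exp_le_exp.2 (mul_le_mul_of_nonneg_left hZ (Real.log_nonneg (by norm_num)))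
  have h4 := mul_le_mul h3 h2 (by positivity) (by positivity)
  rw [← Real.exp_add] at h4
  refine le_trans (by exact_mod_cast h1) (h4.trans (Real.exp_le_exp.2 ?_))
  have hN : (0:ℝ) < 2 ^ n := by positivity
  have l2 := Real.log_two_gt_d9
  have : Real.log 2 * (4995 / 10000) + (1 / 2 ^ 14 + 7 / 10 * (14:ℕ) * (1 / 100000)) ≤
    Real.log 2 / 2 - 1 / 10000 := by norm_num; linarith
  have := mul_le_mul_of_nonneg_right this hN.le
  linarith

open Classical in
def bad1 (n m : ℕ) : Finset (Finset (V n)) := univ.filter fun A =>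
  ∃ (lam : Fin m → V n) (P : Finset (Fin m → ZMod 2)),
    (#(pre lam P) : ℝ) ≤ 4995 / 10000 * 2 ^ n ∧ (#(A \ pre lam P) : ℝ) ≤ 1 / 100000 * 2 ^ n

open Classical in
lemma card_bad1 (n m : ℕ) : (#(bad1 n m) : ℝ) ≤
    (2 ^ n) ^ m * 2 ^ 2 ^ m * Real.exp ((Real.log 2 / 2 - 1 / 10000) * 2 ^ n) := by
  set I := (univ : Finset ((Fin m → V n) × Finset (Fin m → ZMod 2))).filter fun i =>
    (#(pre i.1 i.2) : ℝ) ≤ 4995 / 10000 * 2 ^ n with hI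
  have h1 : bad1 n m ⊆ I.biUnion fun i =>
      (univ : Finset (Finset (V n))).filter fun A => (#(A \ pre i.1 i.2) : ℝ) ≤ 1 / 100000 * 2 ^ n := by
    intro A hA
    obtain ⟨lam, P, h1, h2⟩ := (mem_filter.1 hA).2
    simp only [mem_biUnion, mem_filter, mem_univ, true_and, hI]
    exact ⟨(lam, P), h1, h2⟩
  have h2 := (card_le_card h1).trans card_biUnion_le
  have h3 : (#(bad1 n m) : ℝ) ≤ ∑ i ∈ I, Real.exp ((Real.log 2 / 2 - 1 / 10000) * 2 ^ n) := by
    refine le_trans (Nat.cast_le.2 h2) ?_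
    push_cast
    exact sum_le_sum fun i hi => card_bad1_aux _ (mem_filter.1 hi).2
  rw [sum_const, nsmul_eq_mul] at h3
  refine h3.trans (mul_le_mul_of_nonneg_right ?_ (Real.exp_pos _).le)
  have h4 : #I ≤ (2 ^ n) ^ m * 2 ^ 2 ^ m := by
    refine (card_le_univ I).trans (le_of_eq ?_)
    rw [Fintype.card_prod, Fintype.card_fun, cardV, Fintype.card_finset, Fintype.card_fun, ZMod.card,
      Fintype.card_fin]
  exact_mod_cast h4

open Classical in
lemma card_bad2_aux {a x : V n} (ha : a ≠ 0) (hx : x ≠ 0) (hax : a ⬝ᵥ x = 0) (b : ZMod 2) :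
    (#((univ : Finset (Finset (V n))).filter fun A =>
      (#(A ∩ hyp a b) : ℝ) ≤ 1 / 250 * 2 ^ n ∧ free x A) : ℝ) ≤ Real.exp (302 / 1000 * 2 ^ n) := by
  have h1 := card_split (hyp a (b + 1)) (free x) (fun B => (#B : ℝ) ≤ 1 / 250 * 2 ^ n)
    ((univ : Finset (Finset (V n))).filter fun A =>
      (#(A ∩ hyp a b) : ℝ) ≤ 1 / 250 * 2 ^ n ∧ free x A) (fun A hA => by
        obtain ⟨hA1, hA2⟩ := (mem_filter.1 hA).2
        constructor
        · intro y hy hy'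
          exact hA2 y (mem_inter.1 hy).1 (mem_inter.1 hy').1
        · refine le_trans ?_ hA1
          have : A \ hyp a (b + 1) ⊆ A ∩ hyp a b := by
            intro y hy
            rw [mem_sdiff, mem_hyp] at hy
            rw [mem_inter, mem_hyp]
            refine ⟨hy.1, ?_⟩
            have e : ∀ u v : ZMod 2, u ≠ v + 1 → u = v := by decide
            exact e _ _ hy.2
          exact_mod_cast card_le_card this)
  have h2 := card_small (n := n) 8 (1 / 250)
  have h3 := card_free ha hx hax (b + 1)
  have h4 := mul_le_mul h3 h2 (by positivity) (by positivity)
  rw [← Real.exp_add] at h4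
  refine le_trans (by exact_mod_cast h1) (h4.trans (Real.exp_le_exp.2 ?_))
  have hN : (0:ℝ) < 2 ^ n := by positivity
  norm_num
  linarith

open Classical in
def bad2 (n : ℕ) : Finset (Finset (V n)) := univ.filter fun A =>
  ∃ (a : V n) (b : ZMod 2) (x : V n), (a ≠ 0 ∧ x ≠ 0 ∧ a ⬝ᵥ x = 0) ∧
    ((#(A ∩ hyp a b) : ℝ) ≤ 1 / 250 * 2 ^ n ∧ free x A)

lemma mem_bad2 {A : Finset (V n)} (h : ∃ (a : V n) (b : ZMod 2) (x : V n), (a ≠ 0 ∧ x ≠ 0 ∧ a ⬝ᵥ x = 0) ∧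
    ((#(A ∩ hyp a b) : ℝ) ≤ 1 / 250 * 2 ^ n ∧ free x A)) : A ∈ bad2 n := by
  classical
  exact mem_filter.2 ⟨mem_univ _, h⟩

open Classical in
lemma card_bad2 (n : ℕ) : (#(bad2 n) : ℝ) ≤ 2 * (2 ^ n) ^ 2 * Real.exp (302 / 1000 * 2 ^ n) := by
  set I := (univ : Finset (V n × ZMod 2 × V n)).filter fun i =>
    (i.1 ≠ 0 ∧ i.2.2 ≠ 0 ∧ i.1 ⬝ᵥ i.2.2 = 0) with hI
  have h1 : bad2 n ⊆ I.biUnion fun i => (univ : Finset (Finset (V n))).filter fun A =>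
      (#(A ∩ hyp i.1 i.2.1) : ℝ) ≤ 1 / 250 * 2 ^ n ∧ free i.2.2 A := by
    intro A hA
    obtain ⟨a, b, x, h1, h2⟩ := (mem_filter.1 hA).2
    simp only [mem_biUnion, mem_filter, mem_univ, true_and, hI]
    exact ⟨(a, b, x), h1, h2⟩
  have h2 := (card_le_card h1).trans card_biUnion_le
  have h3 : (#(bad2 n) : ℝ) ≤ ∑ i ∈ I, Real.exp (302 / 1000 * 2 ^ n) := by
    refine le_trans (Nat.cast_le.2 h2) ?_
    push_cast
    refine sum_le_sum fun i hi => ?_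
    obtain ⟨h1, h2, h3⟩ := (mem_filter.1 hi).2
    exact card_bad2_aux h1 h2 h3 _
  rw [sum_const, nsmul_eq_mul] at h3
  refine h3.trans (mul_le_mul_of_nonneg_right ?_ (Real.exp_pos _).le)
  have h4 : #I ≤ 2 * (2 ^ n) ^ 2 := by
    refine (card_le_univ I).trans (le_of_eq ?_)
    rw [Fintype.card_prod, Fintype.card_prod, cardV, ZMod.card]
    ring
  exact_mod_cast h4

lemma card_nz : #((univ : Finset (V n)).filter fun a => a ≠ 0) = 2 ^ n - 1 := by
  rw [filter_ne' univ (0 : V n), card_erase_of_mem (mem_univ _), card_univ, cardV]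

lemma pow_half (hn : 1 ≤ n) : 2 * 2 ^ (n - 1) = 2 ^ n := by
  rw [← pow_succ']; congr 1; omega

open Classical in
def good (n : ℕ) : Finset (Finset (V n)) := univ.filter fun S => ∃ a : V n, a ≠ 0 ∧ hyp a 0 ⊆ S

open Classical in
lemma card_good (hn : 1 ≤ n) : #(good n) ≤ (2 ^ n - 1) * 2 ^ 2 ^ (n - 1) := by
  have h1 : good n ⊆ ((univ : Finset (V n)).filter fun a => a ≠ 0).biUnion fun a => Icc (hyp a 0) univ := by
    intro S hS
    obtain ⟨a, ha, h⟩ := (mem_filter.1 hS).2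
    simp only [mem_biUnion, mem_filter, mem_univ, true_and, mem_Icc]
    exact ⟨a, ha, h, subset_univ _⟩
  rw [← card_nz]
  refine (card_le_card h1).trans (card_biUnion_le_card_mul _ _ _ fun a ha => le_of_eq ?_)
  rw [card_Icc_finset (subset_univ _), card_univ, cardV]
  congr 1
  have := card_hyp (mem_filter.1 ha).2 0
  have := pow_half hn
  omega

lemma sumset_cover (m : ℕ) (hm : ∀ (n : ℕ) (A C : Finset (V n)),
    (∀ a ∈ A, ∀ b ∈ A, a + b ∉ C) → ∃ (lam : Fin m → V n) (P Q : Finset (Fin m → ZMod 2)),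
      (#(A \ pre lam P) : ℝ) ≤ 1 / 100000 * 2 ^ n ∧ (#(C \ pre lam Q) : ℝ) ≤ 1 / 100000 * 2 ^ n ∧
      T (ind (pre lam P)) (ind (pre lam P)) (ind (pre lam Q)) ≤ 1 / 100000 * (2 ^ n) ^ 2) (n : ℕ) :
    sumsets n ⊆ good n ∪ ((bad1 n m).image (fun A => A + A) ∪ ((bad1 n m).image (fun C => Cᶜ) ∪
      (bad2 n).image (fun A => A + A))) := by
  intro S hS
  obtain ⟨A, -, rfl⟩ := mem_image.1 hS
  by_cases hg : A + A ∈ good n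
  · exact mem_union_left _ hg
  apply mem_union_right
  by_cases hA : A = ∅
  · apply mem_union_left
    refine mem_image_of_mem _ (mem_filter.2 ⟨mem_univ _, fun _ => 0, ∅, ?_⟩)
    subst hA
    simp [pre]
  obtain ⟨lam, P, Q, hP, hQ, hT⟩ := hm n A (A + A)ᶜ (fun a ha b hb => by
    rw [mem_compl, not_not]; exact add_mem_add ha hb)
  by_cases h1 : (#(pre lam P) : ℝ) ≤ 4995 / 10000 * 2 ^ n
  · apply mem_union_left
    exact mem_image_of_mem _ (mem_filter.2 ⟨mem_univ _, lam, P, h1, hP⟩)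
  apply mem_union_right
  by_cases h2 : (#(pre lam Q) : ℝ) ≤ 4995 / 10000 * 2 ^ n
  · apply mem_union_left
    exact mem_image.2 ⟨(A + A)ᶜ, mem_filter.2 ⟨mem_univ _, lam, Q, h2, hQ⟩, compl_compl _⟩
  apply mem_union_right
  push Not at h1 h2
  obtain ⟨a, ha, b, hb⟩ := struct _ _ h1.le h2.le hT
  refine mem_image_of_mem _ ?_
  apply mem_bad2
  have hns : ¬ hyp a 0 ⊆ A + A := fun h => hg (mem_filter.2 ⟨mem_univ _, a, ha, h⟩)
  obtain ⟨x, hx, hxA⟩ := not_subset.1 hns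
  have hN : (0:ℝ) < 2 ^ n := by positivity
  obtain ⟨y, hy⟩ := nonempty_iff_ne_empty.2 hA
  refine ⟨a, b, x, ⟨ha, ?_, mem_hyp.1 hx⟩, ?_, ?_⟩
  · rintro rfl
    apply hxA
    rw [← vadd_self y]; exact add_mem_add hy hy
  · have hs : A ∩ hyp a b ⊆ (A \ pre lam P) ∪ (pre lam P ∩ hyp a b) := by
      intro z hz
      simp only [mem_union, mem_sdiff, mem_inter] at hz ⊢
      tauto
    have := (card_le_card hs).trans (card_union_le _ _)
    have h3 : (#(A ∩ hyp a b) : ℝ) ≤ #(A \ pre lam P) + #(pre lam P ∩ hyp a b) := by exact_mod_cast this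
    linarith
  · intro z hz hzx
    apply hxA
    have : x = z + (z + x) := by rw [← add_assoc, vadd_self, zero_add]
    rw [this]; exact add_mem_add hz hzx

lemma exp_half (hn : 1 ≤ n) : (2:ℝ) ^ 2 ^ (n - 1) = Real.exp (Real.log 2 / 2 * 2 ^ n) := by
  have h : (2:ℝ) * 2 ^ (n - 1) = 2 ^ n := by exact_mod_cast pow_half hn
  have e : Real.log 2 / 2 * 2 ^ n = ((2 ^ (n - 1) : ℕ) : ℝ) * Real.log 2 := by
    push_cast; rw [← h]; ring
  rw [e, Real.exp_nat_mul, Real.exp_log (by norm_num)]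

lemma upper : ∃ m : ℕ, ∀ n : ℕ, 1 ≤ n → (#(sumsets n) : ℝ) ≤ ((2:ℝ) ^ n - 1) * 2 ^ 2 ^ (n - 1) +
    (2 * ((2 ^ n) ^ m * 2 ^ 2 ^ m * Real.exp ((Real.log 2 / 2 - 1 / 10000) * 2 ^ n)) +
      2 * (2 ^ n) ^ 2 * Real.exp (302 / 1000 * 2 ^ n)) := by
  obtain ⟨m, hm⟩ := container (1 / 100000) (1 / 100000) (by norm_num) (by norm_num)
  refine ⟨m, fun n hn => ?_⟩
  have h1 := card_le_card (sumset_cover m hm n)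
  have h2 := card_union_le (good n) ((bad1 n m).image (fun A => A + A) ∪ ((bad1 n m).image (fun C => Cᶜ) ∪
      (bad2 n).image (fun A => A + A)))
  have h3 := card_union_le ((bad1 n m).image (fun A => A + A)) ((bad1 n m).image (fun C => Cᶜ) ∪
      (bad2 n).image (fun A => A + A))
  have h4 := card_union_le ((bad1 n m).image (fun C => Cᶜ)) ((bad2 n).image (fun A => A + A))
  have h5 : #((bad1 n m).image (fun A => A + A)) ≤ #(bad1 n m) := card_image_le
  have h6 : #((bad1 n m).image (fun C => Cᶜ)) ≤ #(bad1 n m) := card_image_le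
  have h7 : #((bad2 n).image (fun A => A + A)) ≤ #(bad2 n) := card_image_le
  have h8 := card_good hn
  have h9 : #(sumsets n) ≤ (2 ^ n - 1) * 2 ^ 2 ^ (n - 1) + (2 * #(bad1 n m) + #(bad2 n)) := by omega
  have h10 : (#(sumsets n) : ℝ) ≤ ((2:ℝ) ^ n - 1) * 2 ^ 2 ^ (n - 1) + (2 * #(bad1 n m) + #(bad2 n)) := by
    have := (Nat.cast_le (α := ℝ)).2 h9
    rw [Nat.cast_add, Nat.cast_mul, Nat.cast_sub (Nat.one_le_two_pow)] at this
    push_cast at this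
    exact this
  have h11 := card_bad1 n m
  have h12 := card_bad2 n
  linarith

lemma exists_sep {a a' : V n} (ha' : a' ≠ 0) (h : a' ≠ a) : ∃ x : V n, a ⬝ᵥ x = 0 ∧ a' ⬝ᵥ x = 1 := by
  obtain ⟨x, hx⟩ := exists_dot ha'
  rcases z2 (a ⬝ᵥ x) with h0 | h0
  · exact ⟨x, h0, hx⟩
  have hne : a + a' ≠ 0 := fun hc => h (vadd_eq_zero.1 hc)
  obtain ⟨y, hy⟩ := exists_dot hne
  rw [add_dotProduct] at hy
  rcases z2 (a ⬝ᵥ y) with h1 | h1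
  · rw [h1, zero_add] at hy
    exact ⟨y, h1, hy⟩
  · rw [h1] at hy
    have e : ∀ u : ZMod 2, 1 + u = 1 → u = 0 := by decide
    refine ⟨x + y, ?_, ?_⟩
    · rw [dotProduct_add, h0, h1]; decide
    · rw [dotProduct_add, hx, e _ hy, add_zero]

def nice (a : V n) (B : Finset (V n)) : Prop :=
  ∀ x : V n, x ≠ 0 → a ⬝ᵥ x = 0 → ¬ free x B ∧ ¬ free x (hyp a 1 \ B)

open Classical in
lemma card_nice (hn : 1 ≤ n) {a : V n} (ha : a ≠ 0) :
    (2:ℝ) ^ 2 ^ (n - 1) - 2 * 2 ^ n * Real.exp (275 / 1000 * 2 ^ n) ≤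
      #((hyp a 1).powerset.filter (nice a)) := by
  have hc : #(hyp a 1).powerset = 2 ^ 2 ^ (n - 1) := by
    rw [card_powerset]; congr 1
    have := card_hyp ha 1
    have := pow_half hn
    omega
  have h1 := card_filter_add_card_filter_not (s := (hyp a 1).powerset) (nice a)
  set I := (univ : Finset (V n)).filter fun x => x ≠ 0 ∧ a ⬝ᵥ x = 0 with hI
  let F : V n → Finset (Finset (V n)) := fun x => (hyp a 1).powerset.filter (free x)
  have h2 : (hyp a 1).powerset.filter (fun B => ¬ nice a B) ⊆
      I.biUnion fun x => F x ∪ (F x).image (fun B => hyp a 1 \ B) := by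
    intro B hB
    rw [mem_filter, mem_powerset] at hB
    obtain ⟨hB1, hB2⟩ := hB
    unfold nice at hB2
    push Not at hB2
    obtain ⟨x, hx, hax, hf⟩ := hB2
    rw [mem_biUnion]
    refine ⟨x, mem_filter.2 ⟨mem_univ _, hx, hax⟩, ?_⟩
    by_cases hfb : free x B
    · exact mem_union_left _ (mem_filter.2 ⟨mem_powerset.2 hB1, hfb⟩)
    · refine mem_union_right _ (mem_image.2 ⟨hyp a 1 \ B, mem_filter.2 ⟨mem_powerset.2 sdiff_subset, hf hfb⟩, ?_⟩)
      exact Finset.sdiff_sdiff_eq_self hB1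
  have h3 := (card_le_card h2).trans card_biUnion_le
  have h4 : (#((hyp a 1).powerset.filter (fun B => ¬ nice a B)) : ℝ) ≤
      ∑ x ∈ I, 2 * Real.exp (275 / 1000 * 2 ^ n) := by
    refine le_trans (Nat.cast_le.2 h3) ?_
    rw [Nat.cast_sum]
    refine sum_le_sum fun x hx => ?_
    obtain ⟨hx1, hx2⟩ := (mem_filter.1 hx).2
    have e1 := card_free ha hx1 hx2 1
    have e2 := card_union_le (F x) ((F x).image (fun B => hyp a 1 \ B))
    have e3 : #((F x).image (fun B => hyp a 1 \ B)) ≤ #(F x) := card_image_le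
    have e4 : (#(F x ∪ (F x).image (fun B => hyp a 1 \ B)) : ℝ) ≤ 2 * #(F x) := by
      have : #(F x ∪ (F x).image (fun B => hyp a 1 \ B)) ≤ 2 * #(F x) := by omega
      exact_mod_cast this
    linarith
  rw [sum_const, nsmul_eq_mul] at h4
  have h5 := mul_le_mul_of_nonneg_right (card_le I) (by positivity : 0 ≤ 2 * Real.exp (275 / 1000 * 2 ^ n))
  have h6 : (#((hyp a 1).powerset.filter (nice a)) : ℝ) +
      #((hyp a 1).powerset.filter (fun B => ¬ nice a B)) = 2 ^ 2 ^ (n - 1) := by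
    rw [hc] at h1; exact_mod_cast h1
  linarith

lemma nice_sumset {a : V n} {B : Finset (V n)} (hB : B ⊆ hyp a 1) (h : nice a B) :
    hyp a 0 ∪ B ∈ sumsets n := by
  refine mem_image.2 ⟨insert 0 B, mem_univ _, ?_⟩
  ext z
  simp only [mem_add, mem_insert, mem_union, mem_hyp]
  constructor
  · rintro ⟨u, hu, v, hv, rfl⟩
    rcases hu with rfl | hu <;> rcases hv with rfl | hv
    · left; simp
    · right; simpa using hv
    · right; simpa using hu
    · left
      rw [dotProduct_add, mem_hyp.1 (hB hu), mem_hyp.1 (hB hv)]; decide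
  · rintro (hz | hz)
    · by_cases hz0 : z = 0
      · exact ⟨0, Or.inl rfl, 0, Or.inl rfl, by simp [hz0]⟩
      · have := (h z hz0 hz).1
        unfold free at this
        push Not at this
        obtain ⟨y, hy, hy'⟩ := this
        exact ⟨y, Or.inr hy, y + z, Or.inr hy', by rw [← add_assoc, vadd_self, zero_add]⟩
    · exact ⟨0, Or.inl rfl, z, Or.inr hz, zero_add _⟩

lemma nice_inj {a a' : V n} {B : Finset (V n)} (ha' : a' ≠ 0) (h : nice a B)
    (hs : hyp a' 0 ⊆ hyp a 0 ∪ B) : a' = a := by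
  by_contra hne
  obtain ⟨x, hx, hx'⟩ := exists_sep ha' hne
  have hx0 : x ≠ 0 := by rintro rfl; simp at hx'
  apply (h x hx0 hx).2
  have key : ∀ y ∈ hyp a 1 \ B, a' ⬝ᵥ y = 1 := by
    intro y hy
    rw [mem_sdiff, mem_hyp] at hy
    rcases z2 (a' ⬝ᵥ y) with h0 | h0
    · have := hs (mem_hyp.2 h0)
      rw [mem_union, mem_hyp, hy.1] at this
      rcases this with h1 | h1
      · exact absurd h1 (by decide)
      · exact absurd h1 hy.2
    · exact h0
  intro y hy hyx
  have h1 := key _ hy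
  have h2 := key _ hyx
  rw [dotProduct_add, h1, hx'] at h2
  exact absurd h2 (by decide)

open Classical in
lemma lower (hn : 1 ≤ n) : ((2:ℝ) ^ n - 1) *
    (2 ^ 2 ^ (n - 1) - 2 * 2 ^ n * Real.exp (275 / 1000 * 2 ^ n)) ≤ #(sumsets n) := by
  set J := (univ : Finset (V n)).filter fun a => a ≠ 0 with hJ
  set G := J.sigma fun a => (hyp a 1).powerset.filter (nice a) with hG
  have h1 : #G ≤ #(sumsets n) := by
    refine card_le_card_of_injOn (fun p => hyp p.1 0 ∪ p.2) ?_ ?_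
    · rintro ⟨a, B⟩ hp
      simp only [hG, mem_coe, mem_sigma, mem_filter, mem_powerset] at hp
      exact nice_sumset hp.2.1 hp.2.2
    · rintro ⟨a, B⟩ hp ⟨a', B'⟩ hp' he
      simp only [hG, hJ, mem_coe, mem_sigma, mem_filter, mem_powerset, mem_univ, true_and] at hp hp' he
      have : a' = a := nice_inj hp'.1 hp.2.2 (he ▸ subset_union_left)
      subst this
      have key : ∀ D : Finset (V n), D ⊆ hyp a' 1 → (hyp a' 0 ∪ D) ∩ hyp a' 1 = D := by
        intro D hD
        ext z
        rw [mem_inter, mem_union, mem_hyp, mem_hyp]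
        constructor
        · rintro ⟨h1 | h1, h2⟩
          · rw [h1] at h2; exact absurd h2 (by decide)
          · exact h1
        · intro h1; exact ⟨Or.inr h1, mem_hyp.1 (hD h1)⟩
      have hBB : B = B' := by rw [← key B hp.2.1, ← key B' hp'.2.1, he]
      rw [hBB]
  rw [hG, card_sigma] at h1
  refine le_trans ?_ (Nat.cast_le.2 h1)
  rw [Nat.cast_sum]
  have h2 : ∑ a ∈ J, ((2:ℝ) ^ 2 ^ (n - 1) - 2 * 2 ^ n * Real.exp (275 / 1000 * 2 ^ n)) ≤
      ∑ a ∈ J, (#((hyp a 1).powerset.filter (nice a)) : ℝ) :=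
    sum_le_sum fun a ha => card_nice hn (mem_filter.1 ha).2
  rw [sum_const, hJ, card_nz, nsmul_eq_mul, Nat.cast_sub Nat.one_le_two_pow] at h2
  push_cast at h2
  exact h2

lemma tend (k : ℕ) (K c : ℝ) (hc : 0 < c) : Filter.Tendsto
    (fun n : ℕ => K * ((2:ℝ) ^ n) ^ k * Real.exp (-c * 2 ^ n)) Filter.atTop (nhds 0) := by
  have h1 := tendsto_rpow_mul_exp_neg_mul_atTop_nhds_zero k c hc
  have h2 : Filter.Tendsto (fun n : ℕ => (2:ℝ) ^ n) Filter.atTop Filter.atTop :=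
    tendsto_pow_atTop_atTop_of_one_lt (by norm_num)
  have h3 := (h1.comp h2).const_mul K
  rw [mul_zero] at h3
  refine h3.congr fun n => ?_
  simp only [Function.comp, Real.rpow_natCast]
  ring

theorem main (ε : ℝ) (hε : 0 < ε) : ∃ n₀ : ℕ, ∀ n : ℕ, n₀ ≤ n →
      (1 - ε) * (((2 : ℝ) ^ n - 1) * 2 ^ 2 ^ (n - 1)) ≤ ((sumsets n).card : ℝ) ∧
      ((sumsets n).card : ℝ) ≤ (1 + ε) * (((2 : ℝ) ^ n - 1) * 2 ^ 2 ^ (n - 1)) := by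
  obtain ⟨m, hm⟩ := upper
  have t1 := (tend m (2 * 2 ^ 2 ^ m) (1 / 10000) (by norm_num)).eventually (gt_mem_nhds (half_pos hε))
  have t2 := (tend 2 2 (1 / 100) (by norm_num)).eventually (gt_mem_nhds (half_pos hε))
  have t3 := (tend 1 2 (1 / 100) (by norm_num)).eventually (gt_mem_nhds hε)
  obtain ⟨n₀, hn₀⟩ := Filter.eventually_atTop.1 ((t1.and t2).and t3)
  refine ⟨max n₀ 1, fun n hn => ?_⟩
  have hn1 : 1 ≤ n := (le_max_right _ _).trans hn
  obtain ⟨⟨s1, s2⟩, s3⟩ := hn₀ n ((le_max_left _ _).trans hn)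
  have hN2 : (2:ℝ) ≤ 2 ^ n := by
    calc (2:ℝ) = 2 ^ 1 := by norm_num
      _ ≤ 2 ^ n := pow_le_pow_right₀ (by norm_num) hn1
  have hE := exp_half hn1
  have l2 := Real.log_two_gt_d9
  set E : ℝ := Real.exp (Real.log 2 / 2 * 2 ^ n) with hEd
  have hE0 : 0 < E := Real.exp_pos _
  have hU := hm n hn1
  have hL := lower hn1
  rw [hE] at hU hL ⊢
  have b1 : Real.exp ((Real.log 2 / 2 - 1 / 10000) * 2 ^ n) = Real.exp (-(1 / 10000) * 2 ^ n) * E := by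
    rw [hEd, ← Real.exp_add]; congr 1; ring
  have b2 : Real.exp (302 / 1000 * 2 ^ n) ≤ Real.exp (-(1 / 100) * 2 ^ n) * E := by
    rw [hEd, ← Real.exp_add, Real.exp_le_exp]; nlinarith
  have b3 : Real.exp (275 / 1000 * 2 ^ n) ≤ Real.exp (-(1 / 100) * 2 ^ n) * E := by
    rw [hEd, ← Real.exp_add, Real.exp_le_exp]; nlinarith
  rw [b1] at hU
  constructor
  · refine le_trans ?_ hL
    have c1 : 2 * 2 ^ n * Real.exp (275 / 1000 * 2 ^ n) ≤ ε * E := by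
      calc 2 * 2 ^ n * Real.exp (275 / 1000 * 2 ^ n) ≤ 2 * 2 ^ n * (Real.exp (-(1 / 100) * 2 ^ n) * E) :=
            mul_le_mul_of_nonneg_left b3 (by positivity)
        _ = (2 * (2 ^ n) ^ 1 * Real.exp (-(1 / 100) * 2 ^ n)) * E := by ring
        _ ≤ ε * E := mul_le_mul_of_nonneg_right s3.le hE0.le
    have := mul_le_mul_of_nonneg_left c1 (by linarith : (0:ℝ) ≤ 2 ^ n - 1)
    linarith
  · have c2 : 2 * (2 ^ n) ^ 2 * Real.exp (302 / 1000 * 2 ^ n) ≤ ε / 2 * E := by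
      calc 2 * (2 ^ n) ^ 2 * Real.exp (302 / 1000 * 2 ^ n) ≤
          2 * (2 ^ n) ^ 2 * (Real.exp (-(1 / 100) * 2 ^ n) * E) :=
            mul_le_mul_of_nonneg_left b2 (by positivity)
        _ = (2 * (2 ^ n) ^ 2 * Real.exp (-(1 / 100) * 2 ^ n)) * E := by ring
        _ ≤ ε / 2 * E := mul_le_mul_of_nonneg_right s2.le hE0.le
    have c1 := mul_le_mul_of_nonneg_right s1.le hE0.le
    have c3 : ε * E ≤ ε * ((2 ^ n - 1) * E) :=
      mul_le_mul_of_nonneg_left (le_mul_of_one_le_left hE0.le (by linarith)) hε.le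
    generalize Real.exp (-(1 / 10000) * 2 ^ n) = X at *
    generalize (2:ℝ) ^ 2 ^ m = Y at *
    linarith

end SC
end

/-- `|𝒮ₙ| ~ (2ⁿ − 1)·2^(2^(n−1))`. -/
theorem sumset_count_asymptotic :
    ∀ ε : ℝ, 0 < ε → ∃ n₀ : ℕ, ∀ n : ℕ, n₀ ≤ n →
      (1 - ε) * (((2 : ℝ) ^ n - 1) * 2 ^ 2 ^ (n - 1)) ≤ ((sumsets n).card : ℝ) ∧
      ((sumsets n).card : ℝ) ≤ (1 + ε) * (((2 : ℝ) ^ n - 1) * 2 ^ 2 ^ (n - 1)) := by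
  intro ε hε
  exact SC.main ε hε
end

section
/- For every ε > 0 there exists n₀ such that for all n ≥ n₀, the symmetric difference of 𝒮ₙ and ℋₙ satisfies |𝒮ₙ Δ ℋₙ| ≤ ε·|𝒮ₙ|. (That is, |𝒮ₙ Δ ℋₙ| = o(|𝒮ₙ|).) -/
open Pointwise

/-- `v^⊥ = {x : ⟨x, v⟩ = 0}`. -/
def perp {n : ℕ} (v : V n) : Finset (V n) :=
  Finset.univ.filter (fun x => ∑ i, x i * v i = 0)

/-- `ℋₙ`: subsets of `F₂ⁿ` containing a complete linear subspace of co-dimension 1. -/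
def Hfam (n : ℕ) : Finset (Finset (V n)) :=
  Finset.univ.filter (fun S => ∃ v : V n, v ≠ 0 ∧ perp v ⊆ S)


section AuxGroup

variable {G : Type*} [AddCommGroup G] [Fintype G] [DecidableEq G]

/-- subsets of `D` avoiding the difference `t` -/
def indSets (D : Finset G) (t : G) : Finset (Finset G) :=
  D.powerset.filter (fun A => ∀ a ∈ A, a + t ∉ A)

/-- elements of `D` with `a + t ∈ D` -/
def shiftIn (D : Finset G) (t : G) : Finset G := D.filter (fun a => a + t ∈ D)

theorem indSets_card (h2 : ∀ x : G, x + x = 0) (t : G) (j : ℕ) :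
    ∀ D : Finset G, 2 * j ≤ (shiftIn D t).card →
      (indSets D t).card * 4 ^ j ≤ 2 ^ D.card * 3 ^ j := by
  have hcancel : ∀ x y : G, x + y + y = x := fun x y => by rw [add_assoc, h2, add_zero]
  by_cases ht : t = 0
  · intro D hj
    subst ht
    have h1 : indSets D (0 : G) ⊆ {∅} := by
      intro A hA
      simp only [indSets, Finset.mem_filter, add_zero] at hA
      simp only [Finset.mem_singleton]
      exact Finset.eq_empty_of_forall_notMem (fun a ha => hA.2 a ha ha)
    have h3 : (indSets D (0 : G)).card ≤ 1 := by simpa using Finset.card_le_card h1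
    have h4 : 2 * j ≤ D.card := hj.trans (Finset.card_le_card (Finset.filter_subset _ _))
    calc _ ≤ 1 * 4 ^ j := Nat.mul_le_mul_right _ h3
      _ = 2 ^ (2 * j) * 1 := by rw [pow_mul]; norm_num
      _ ≤ _ := Nat.mul_le_mul (Nat.pow_le_pow_right (by norm_num) h4) (Nat.one_le_pow _ _ (by norm_num))
  induction j with
  | zero =>
    intro D _
    have := Finset.card_le_card (Finset.filter_subset (fun A : Finset G => ∀ a ∈ A, a + t ∉ A) D.powerset)
    simpa [indSets] using this
  | succ j ih =>
    intro D hj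
    have hne : (shiftIn D t).Nonempty := by
      rw [← Finset.card_pos]; omega
    obtain ⟨a, ha⟩ := hne
    simp only [shiftIn, Finset.mem_filter] at ha
    obtain ⟨haD, hbD⟩ := ha
    have hab : a ≠ a + t := fun h => ht (by simpa using h.symm)
    set b := a + t with hb
    have hbt : b + t = a := hcancel a t
    set D' := (D.erase a).erase b with hD'
    have hDc : D.card = D'.card + 2 := by
      have h1 : b ∈ D.erase a := Finset.mem_erase.2 ⟨hab.symm, hbD⟩
      have e1 := Finset.card_erase_add_one h1
      have e2 := Finset.card_erase_add_one haD
      rw [← hD'] at e1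
      omega
    have hM : 2 * j ≤ (shiftIn D' t).card := by
      have hsub : ((shiftIn D t).erase a).erase b ⊆ shiftIn D' t := by
        intro x hx
        simp only [shiftIn, Finset.mem_erase, Finset.mem_filter, hD'] at hx ⊢
        refine ⟨⟨hx.1, hx.2.1, hx.2.2.1⟩, ?_, ?_, hx.2.2.2⟩
        · intro h
          exact hx.2.1 (by rw [hb] at h; exact add_right_cancel h)
        · intro h
          apply hx.1
          rw [hb, ← h, hcancel]
      have h1 := Finset.card_le_card hsub
      have h2' := Finset.pred_card_le_card_erase (s := (shiftIn D t).erase a) (a := b)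
      have h3 := Finset.pred_card_le_card_erase (s := (shiftIn D t)) (a := a)
      omega
    have key : (indSets D t).card ≤ (indSets D' t ×ˢ ({∅, {a}, {b}} : Finset (Finset G))).card := by
      apply Finset.card_le_card_of_injOn (fun A => (A ∩ D', A ∩ {a, b}))
      · intro A hA
        simp only [indSets, Finset.coe_filter, Finset.mem_powerset, Set.mem_ofPred_eq] at hA
        simp only [Finset.coe_product, Set.mem_prod, Finset.mem_coe, indSets, Finset.mem_filter,
          Finset.mem_powerset]
        refine ⟨⟨Finset.inter_subset_right, ?_⟩, ?_⟩
        · intro x hx hx'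
          exact hA.2 x (Finset.mem_inter.1 hx).1 (Finset.mem_inter.1 hx').1
        · by_cases h1 : a ∈ A
          · have h3 : b ∉ A := hA.2 a h1
            have : A ∩ {a, b} = {a} := by
              ext x; simp only [Finset.mem_inter, Finset.mem_insert, Finset.mem_singleton]
              constructor
              · rintro ⟨h, rfl | rfl⟩
                · rfl
                · exact absurd h h3
              · rintro rfl; exact ⟨h1, Or.inl rfl⟩
            simp [this]
          · by_cases h3 : b ∈ A
            · have : A ∩ {a, b} = {b} := by
                ext x; simp only [Finset.mem_inter, Finset.mem_insert, Finset.mem_singleton]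
                constructor
                · rintro ⟨h, rfl | rfl⟩
                  · exact absurd h h1
                  · rfl
                · rintro rfl; exact ⟨h3, Or.inr rfl⟩
              simp [this]
            · have : A ∩ {a, b} = ∅ := by
                ext x; simp only [Finset.mem_inter, Finset.mem_insert, Finset.mem_singleton]
                constructor
                · rintro ⟨h, rfl | rfl⟩
                  · exact absurd h h1
                  · exact absurd h h3
                · intro h; simp at h
              simp [this]
      · intro A hA B hB hAB
        simp only [indSets, Finset.coe_filter, Finset.mem_powerset, Set.mem_ofPred_eq] at hA hB
        simp only [Prod.mk.injEq] at hAB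
        have hrec : ∀ C : Finset G, C ⊆ D → C = (C ∩ D') ∪ (C ∩ {a, b}) := by
          intro C hC
          ext x
          have := @hC x
          simp only [Finset.mem_union, Finset.mem_inter, hD', Finset.mem_erase,
            Finset.mem_insert, Finset.mem_singleton]
          tauto
        rw [hrec A hA.1, hrec B hB.1, hAB.1, hAB.2]
    have h3 : ({∅, {a}, {b}} : Finset (Finset G)).card ≤ 3 := Finset.card_le_three
    rw [Finset.card_product] at key
    have := ih D' hM
    calc (indSets D t).card * 4 ^ (j + 1)
        ≤ ((indSets D' t).card * 3) * 4 ^ (j + 1) :=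
          Nat.mul_le_mul_right _ (key.trans (Nat.mul_le_mul_left _ h3))
      _ = ((indSets D' t).card * 4 ^ j) * 12 := by ring
      _ ≤ (2 ^ D'.card * 3 ^ j) * 12 := Nat.mul_le_mul_right _ this
      _ = 2 ^ D.card * 3 ^ (j + 1) := by rw [hDc]; ring

/-- the container attached to a fingerprint `F` -/
def cont (T : Finset G) (φ : ℕ) (F : Finset G) : Finset G :=
  Finset.univ.filter (fun v => v ∉ F + T ∧ (T.filter (fun t => v + t ∉ F + T)).card ≤ φ)

theorem container_exists (h2 : ∀ x : G, x + x = 0) (T : Finset G) (φ : ℕ) (A : Finset G)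
    (hA : ∀ a ∈ A, ∀ b ∈ A, a + b ∉ T) :
    ∃ F : Finset G, φ * F.card ≤ Fintype.card G ∧ A ⊆ cont T φ F := by
  obtain ⟨F, hF, hmax⟩ := Finset.exists_max_image A.powerset
    (fun F => ((F + T).card : ℤ) - φ * F.card) ⟨∅, by simp⟩
  rw [Finset.mem_powerset] at hF
  refine ⟨F, ?_, ?_⟩
  · have h := hmax ∅ (by simp)
    simp only [Finset.empty_add, Finset.card_empty] at h
    have h1 : (F + T).card ≤ Fintype.card G := Finset.card_le_univ _
    zify at *
    simp at h
    linarith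
  · intro v hv
    simp only [cont, Finset.mem_filter, Finset.mem_univ, true_and]
    have hvF : v ∉ F + T := by
      intro h
      obtain ⟨f, hf, t, ht, rfl⟩ := Finset.mem_add.1 h
      have := hA f (hF hf) _ hv
      rw [← add_assoc, h2, zero_add] at this
      exact this ht
    refine ⟨hvF, ?_⟩
    by_cases hvF' : v ∈ F
    · have : T.filter (fun t => v + t ∉ F + T) = ∅ := by
        apply Finset.filter_eq_empty_iff.2
        intro t ht
        simpa using Finset.add_mem_add hvF' ht
      simp [this]
    · have h := hmax (insert v F) (by
        rw [Finset.mem_powerset]; exact Finset.insert_subset hv hF)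
      simp only [Finset.card_insert_of_notMem hvF'] at h
      have hsub : (F + T) ∪ (T.filter (fun t => v + t ∉ F + T)).image (fun t => v + t) ⊆
          insert v F + T := by
        apply Finset.union_subset
        · exact Finset.add_subset_add_right (Finset.subset_insert _ _)
        · intro x hx
          obtain ⟨t, ht, rfl⟩ := Finset.mem_image.1 hx
          exact Finset.add_mem_add (Finset.mem_insert_self _ _) (Finset.mem_filter.1 ht).1
      have hdis : Disjoint (F + T) ((T.filter (fun t => v + t ∉ F + T)).image (fun t => v + t)) := by
        rw [Finset.disjoint_right]
        intro x hx
        obtain ⟨t, ht, rfl⟩ := Finset.mem_image.1 hx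
        exact (Finset.mem_filter.1 ht).2
      have h3 := Finset.card_le_card hsub
      rw [Finset.card_union_of_disjoint hdis,
        Finset.card_image_of_injective _ (add_right_injective v)] at h3
      zify at *
      push_cast at h
      linarith

theorem cont_card (T : Finset G) (φ : ℕ) (F : Finset G) :
    2 * T.card * (cont T φ F).card ≤ T.card * Fintype.card G + φ * (cont T φ F).card := by
  set D := cont T φ F with hD
  set W := F + T with hW
  have hWD : W.card + D.card ≤ Fintype.card G := by
    rw [← Finset.card_union_of_disjoint]
    · exact Finset.card_le_univ _
    · rw [Finset.disjoint_right]
      intro v hv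
      simp only [hD, cont, Finset.mem_filter] at hv
      exact hv.2.1
  have h1 : ((D ×ˢ T).filter (fun p => p.1 + p.2 ∈ W)).card ≤ (W ×ˢ T).card := by
    apply Finset.card_le_card_of_injOn (fun p => (p.1 + p.2, p.2))
    · rintro ⟨v, t⟩ hp
      simp only [Finset.coe_filter, Finset.mem_product, Set.mem_ofPred_eq] at hp
      simp only [Finset.coe_product, Set.mem_prod, Finset.mem_coe]
      exact ⟨hp.2, hp.1.2⟩
    · rintro ⟨v, t⟩ _ ⟨v', t'⟩ _ h
      simp only [Prod.mk.injEq] at h ⊢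
      obtain ⟨h, rfl⟩ := h
      exact ⟨add_right_cancel h, rfl⟩
  have h2 : ((D ×ˢ T).filter (fun p => ¬ (p.1 + p.2 ∈ W))).card ≤ φ * D.card := by
    rw [mul_comm]
    have : (D ×ˢ T).filter (fun p => ¬ (p.1 + p.2 ∈ W)) ⊆
        D.biUnion (fun v => (T.filter (fun t => v + t ∉ W)).image (fun t => (v, t))) := by
      rintro ⟨v, t⟩ hp
      simp only [Finset.mem_filter, Finset.mem_product] at hp
      simp only [Finset.mem_biUnion, Finset.mem_image, Finset.mem_filter]
      exact ⟨v, hp.1.1, t, ⟨hp.1.2, hp.2⟩, rfl⟩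
    refine (Finset.card_le_card this).trans (Finset.card_biUnion_le_card_mul _ _ _ ?_)
    intro v hv
    simp only [hD, cont, Finset.mem_filter] at hv
    exact Finset.card_image_le.trans hv.2.2
  have h3 := Finset.card_filter_add_card_filter_not (s := D ×ˢ T) (fun p => p.1 + p.2 ∈ W)
  rw [Finset.card_product] at h1 h3
  nlinarith

theorem sum_subgroup (h2 : ∀ x : G, x + x = 0) (X : Finset G)
    (hX : 3 * Fintype.card G < 8 * X.card) :
    ∃ H : AddSubgroup G, Nat.card G < 4 * Nat.card H ∧
      ∀ h ∈ H, ∃ y ∈ X + X, ∃ z ∈ X + X, h = y + z := by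
  have hcancel : ∀ x y : G, x + y + y = x := fun x y => by rw [add_assoc, h2, add_zero]
  have hne : X.Nonempty := by rw [← Finset.card_pos]; omega
  have inter_card : ∀ P Q R : Finset G, P ⊆ R → Q ⊆ R → P.card + Q.card ≤ (P ∩ Q).card + R.card := by
    intro P Q R hP hQ
    have h1 := Finset.card_union_add_card_inter P Q
    have h3 := Finset.card_le_card (Finset.union_subset hP hQ)
    omega
  have hGpos : 0 < Fintype.card G := Fintype.card_pos
  by_cases hY : Fintype.card G < 2 * (X + X).card
  · refine ⟨⊤, ?_, ?_⟩
    · rw [AddSubgroup.card_top, Nat.card_eq_fintype_card]; omega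
    · intro h _
      have h1 := inter_card (X + X) ((X + X).image (fun y => h + y)) Finset.univ
        (Finset.subset_univ _) (Finset.subset_univ _)
      rw [Finset.card_image_of_injective _ (add_right_injective h), Finset.card_univ] at h1
      have h3 : ((X + X) ∩ ((X + X).image (fun y => h + y))).Nonempty := by
        rw [← Finset.card_pos]; omega
      obtain ⟨y, hy⟩ := h3
      obtain ⟨hy1, hy2⟩ := Finset.mem_inter.1 hy
      obtain ⟨z, hz, hzy⟩ := Finset.mem_image.1 hy2
      exact ⟨y, hy1, z, hz, by rw [← hzy]; exact (hcancel h z).symm⟩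
  · have hXY : X.card ≤ (X + X).card := Finset.card_le_card_add_right hne
    have hr : ∀ z ∈ X + X, Fintype.card G < 4 * (shiftIn X z).card := by
      intro z hz
      obtain ⟨a, ha, b, hb, rfl⟩ := Finset.mem_add.1 hz
      have h1 := inter_card (X.image (fun x => x + a)) (X.image (fun x => x + b)) (X + X)
        (by intro y hy; obtain ⟨x, hx, rfl⟩ := Finset.mem_image.1 hy; exact Finset.add_mem_add hx ha)
        (by intro y hy; obtain ⟨x, hx, rfl⟩ := Finset.mem_image.1 hy; exact Finset.add_mem_add hx hb)
      rw [Finset.card_image_of_injective _ (add_left_injective a),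
        Finset.card_image_of_injective _ (add_left_injective b)] at h1
      have h3 : (X.image (fun x => x + a) ∩ X.image (fun x => x + b)).card ≤
          (shiftIn X (a + b)).card := by
        apply Finset.card_le_card_of_injOn (fun y => y + a)
        · intro y hy
          obtain ⟨hy1, hy2⟩ := Finset.mem_inter.1 (Finset.mem_coe.1 hy)
          obtain ⟨x, hx, hxy⟩ := Finset.mem_image.1 hy1
          obtain ⟨x', hx', hxy'⟩ := Finset.mem_image.1 hy2
          simp only [shiftIn, Finset.coe_filter, Set.mem_ofPred_eq]
          constructor
          · rw [← hxy, hcancel]; exact hx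
          · rw [← add_assoc, hcancel, ← hxy', hcancel]; exact hx'
        · intro y _ y' _ h
          exact add_right_cancel h
      omega
    have hadd : ∀ z ∈ X + X, ∀ w ∈ X + X, z + w ∈ X + X := by
      intro z hz w hw
      have h1 := inter_card (shiftIn X z) (shiftIn X w) X (Finset.filter_subset _ _)
        (Finset.filter_subset _ _)
      have h3 := hr z hz
      have h4 := hr w hw
      have h5 : (shiftIn X z ∩ shiftIn X w).Nonempty := by
        rw [← Finset.card_pos]; omega
      obtain ⟨x, hx⟩ := h5
      simp only [shiftIn, Finset.mem_inter, Finset.mem_filter] at hx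
      have : z + w = (x + z) + (x + w) := by
        rw [add_add_add_comm, h2, zero_add]
      rw [this]
      exact Finset.add_mem_add hx.1.2 hx.2.2
    have h0 : (0 : G) ∈ X + X := by
      obtain ⟨x, hx⟩ := hne
      rw [← h2 x]; exact Finset.add_mem_add hx hx
    refine ⟨{ carrier := ↑(X + X), add_mem' := fun {a b} ha hb => hadd a ha b hb,
              zero_mem' := h0,
              neg_mem' := ?_ }, ?_, ?_⟩
    · intro x hx
      rw [neg_eq_of_add_eq_zero_right (h2 x)]; exact hx
    · have : Nat.card (↑(X + X) : Set G) = (X + X).card := by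
        rw [Nat.card_coe_set_eq, Set.ncard_coe_finset]
      rw [Nat.card_eq_fintype_card (α := G)]
      refine lt_of_lt_of_eq ?_ (congrArg (4 * ·) this.symm)
      show _ < 4 * _
      omega
    · intro h hh
      exact ⟨h, hh, 0, h0, (add_zero h).symm⟩

/-- almost antiperiods -/
def antiP (D : Finset G) (m : ℕ) : Finset G := Finset.univ.filter (fun t => (shiftIn D t).card < m)

theorem near_period (h2 : ∀ x : G, x + x = 0) (D : Finset G) (Q : ℕ)
    (hN : Fintype.card G = 8192 * Q) (hD : 3968 * Q ≤ D.card) (hQ : 0 < Q)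
    (x y : G) (hx : x ∈ antiP D (512 * Q) + antiP D (512 * Q))
    (hy : y ∈ antiP D (512 * Q) + antiP D (512 * Q)) : x + y ∉ antiP D (512 * Q) := by
  have hcancel : ∀ x y : G, x + y + y = x := fun x y => by rw [add_assoc, h2, add_zero]
  have hcompl : ∀ z, (D.filter (fun a => a + z ∉ D)).card + (shiftIn D z).card = D.card := by
    intro z
    have := Finset.card_filter_add_card_filter_not (s := D) (fun a => a + z ∈ D)
    simp only [shiftIn]
    omega
  have h1 : ∀ z ∈ antiP D (512 * Q) + antiP D (512 * Q),
      (D.filter (fun a => a + z ∉ D)).card ≤ 1280 * Q := by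
    intro z hz
    obtain ⟨s, hs, t, ht, rfl⟩ := Finset.mem_add.1 hz
    simp only [antiP, Finset.mem_filter, Finset.mem_univ, true_and] at hs ht
    have hB : ∀ s, (D.filter (fun a => a + s ∉ D)).card ≤ (Dᶜ.filter (fun c => c + s ∈ D)).card := by
      intro s
      apply Finset.card_le_card_of_injOn (fun a => a + s)
      · intro a ha
        simp only [Finset.coe_filter, Set.mem_ofPred_eq, Finset.mem_compl] at ha ⊢
        exact ⟨ha.2, by rw [hcancel]; exact ha.1⟩
      · intro a _ b _ h; exact add_right_cancel h
    have hBs := hB s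
    have hBt := hB t
    have e1 := hcompl s
    have e2 := hcompl t
    have e3 := hcompl (s + t)
    have e4 := Finset.card_union_add_card_inter (Dᶜ.filter (fun c => c + s ∈ D))
      (Dᶜ.filter (fun c => c + t ∈ D))
    have e5 := Finset.card_le_card (Finset.union_subset (Finset.filter_subset (fun c => c + s ∈ D) Dᶜ)
      (Finset.filter_subset (fun c => c + t ∈ D) Dᶜ))
    have e6 : ((Dᶜ.filter (fun c => c + s ∈ D)) ∩ (Dᶜ.filter (fun c => c + t ∈ D))).card ≤
        (shiftIn D (s + t)).card := by
      apply Finset.card_le_card_of_injOn (fun a => a + s)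
      · intro a ha
        simp only [Finset.coe_inter, Finset.coe_filter, Set.mem_inter_iff, Set.mem_ofPred_eq, shiftIn] at ha ⊢
        exact ⟨ha.1.2, by rw [← add_assoc, hcancel]; exact ha.2.2⟩
      · intro a _ b _ h; exact add_right_cancel h
    have e7 := Finset.card_compl_add_card D
    omega
  have hx' := h1 x hx
  have hy' := h1 y hy
  have h3 : (D.filter (fun a => a + (x + y) ∉ D)).card ≤
      (D.filter (fun a => a + x ∉ D)).card + (D.filter (fun a => a + y ∉ D)).card := by
    have hsub : D.filter (fun a => a + (x + y) ∉ D) ⊆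
        D.filter (fun a => a + x ∉ D) ∪ (D.filter (fun a => a + y ∉ D)).image (fun a => a + x) := by
      intro a ha
      simp only [Finset.mem_filter, Finset.mem_union, Finset.mem_image] at ha ⊢
      by_cases h : a + x ∈ D
      · right
        exact ⟨a + x, ⟨h, by rw [add_assoc]; exact ha.2⟩, hcancel a x⟩
      · left; exact ⟨ha.1, h⟩
    refine (Finset.card_le_card hsub).trans ((Finset.card_union_le _ _).trans ?_)
    exact Nat.add_le_add_left Finset.card_image_le _
  have e := hcompl (x + y)
  simp only [antiP, Finset.mem_filter, Finset.mem_univ, true_and]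
  omega

theorem small_count (Q : ℕ) (hN : Fintype.card G = 8192 * Q) :
    ((Finset.univ : Finset (Finset G)).filter (fun F => F.card ≤ Q)).card ≤ 2 ^ (26 * Q) := by
  have h1 := Finset.sum_pow_mul_eq_add_pow (R := ℕ) 1 1024 (Finset.univ : Finset G)
  rw [Finset.powerset_univ, Finset.card_univ, hN] at h1
  have h2 : ((Finset.univ : Finset (Finset G)).filter (fun F => F.card ≤ Q)).card *
      1024 ^ (8191 * Q) ≤ (1 + 1024) ^ (8192 * Q) := by
    rw [← h1, ← smul_eq_mul, ← Finset.sum_const]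
    refine (Finset.sum_le_sum (g := fun F : Finset G => 1 ^ F.card * 1024 ^ (8192 * Q - F.card)) ?_).trans
      (Finset.sum_le_sum_of_subset (Finset.filter_subset _ _))
    intro F hF
    simp only [Finset.mem_filter, Finset.mem_univ, true_and] at hF
    rw [one_pow, one_mul]
    exact Nat.pow_le_pow_right (by norm_num) (by omega)
  have h3 : (1025 : ℕ) ^ 512 ≤ 2 * 1024 ^ 512 := by
    set_option exponentiation.threshold 600 in norm_num
  have h4 : (1 + 1024 : ℕ) ^ (8192 * Q) ≤ 2 ^ (26 * Q) * 1024 ^ (8191 * Q) := by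
    calc (1 + 1024 : ℕ) ^ (8192 * Q) = (1025 ^ 512) ^ (16 * Q) := by rw [← pow_mul]; ring_nf
      _ ≤ (2 * 1024 ^ 512) ^ (16 * Q) := Nat.pow_le_pow_left h3 _
      _ = 2 ^ (16 * Q) * 1024 ^ (8192 * Q) := by rw [mul_pow, ← pow_mul]; ring_nf
      _ = 2 ^ (16 * Q) * (1024 ^ Q * 1024 ^ (8191 * Q)) := by rw [← pow_add]; ring_nf
      _ = 2 ^ (26 * Q) * 1024 ^ (8191 * Q) := by
        rw [show (1024 : ℕ) = 2 ^ 10 by norm_num, ← pow_mul, ← pow_mul, ← mul_assoc, ← pow_add]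
        ring_nf
  exact Nat.le_of_mul_le_mul_right (h2.trans h4) (by positivity)

theorem ind_bound (h2 : ∀ x : G, x + x = 0) (D : Finset G) (t : G) (Q : ℕ)
    (hD : D.card ≤ 4113 * Q) (ht : 512 * Q ≤ (shiftIn D t).card) :
    (indSets D t).card ≤ 2 ^ (4007 * Q) := by
  have h := indSets_card h2 t (256 * Q) D (by omega)
  have h3 : (3 : ℕ) ^ 256 ≤ 2 ^ 406 := by
    set_option exponentiation.threshold 600 in norm_num
  have h4 : 2 ^ D.card * 3 ^ (256 * Q) ≤ 2 ^ (4007 * Q) * 4 ^ (256 * Q) := by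
    calc 2 ^ D.card * 3 ^ (256 * Q) ≤ 2 ^ (4113 * Q) * (2 ^ 406) ^ Q := by
          rw [pow_mul 3]
          exact Nat.mul_le_mul (Nat.pow_le_pow_right (by norm_num) hD) (Nat.pow_le_pow_left h3 _)
      _ = 2 ^ (4007 * Q) * 4 ^ (256 * Q) := by
        rw [show (4 : ℕ) = 2 ^ 2 by norm_num, ← pow_mul, ← pow_mul, ← pow_add, ← pow_add]
        ring_nf
  exact Nat.le_of_mul_le_mul_right (h.trans h4) (by positivity)

end AuxGroup

section AuxV

variable {n : ℕ}

theorem V_add_self (x : V n) : x + x = 0 := by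
  ext i
  exact CharTwo.add_self_eq_zero (x i)

theorem V_card : Fintype.card (V n) = 2 ^ n := by
  simp [V, ZMod.card]

theorem mem_perp (v x : V n) : x ∈ perp v ↔ ∑ i, x i * v i = 0 := by simp [perp]

theorem zmod2_ne (a : ZMod 2) : a ≠ 0 ↔ a = 1 := by
  revert a; decide

theorem dot_add (v x y : V n) : ∑ i, (x + y) i * v i = ∑ i, x i * v i + ∑ i, y i * v i := by
  simp [add_mul, Finset.sum_add_distrib]

theorem add_mem_perp_iff (v x y : V n) (hy : y ∈ perp v) : x + y ∈ perp v ↔ x ∈ perp v := by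
  rw [mem_perp] at *
  rw [mem_perp, dot_add, hy, add_zero]

theorem add_mem_perp_of_not (v x y : V n) (hx : x ∉ perp v) (hy : y ∉ perp v) : x + y ∈ perp v := by
  rw [mem_perp, ← ne_eq, zmod2_ne] at hx hy
  rw [mem_perp, dot_add, hx, hy]; decide

theorem exists_not_mem_perp (v : V n) (hv : v ≠ 0) : ∃ w, w ∉ perp v := by
  obtain ⟨i, hi⟩ := Function.ne_iff.1 hv
  refine ⟨Pi.single i 1, ?_⟩
  rw [mem_perp]
  simpa [Pi.single_apply] using hi

theorem perp_compl_card (v : V n) (hv : v ≠ 0) : (perp v)ᶜ.card = (perp v).card := by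
  obtain ⟨w, hw⟩ := exists_not_mem_perp v hv
  apply le_antisymm
  · apply Finset.card_le_card_of_injOn (fun x => x + w)
    · intro x hx
      simp only [Finset.coe_compl, Set.mem_compl_iff, Finset.mem_coe] at hx ⊢
      exact add_mem_perp_of_not v x w hx hw
    · intro a _ b _ h; exact add_right_cancel h
  · apply Finset.card_le_card_of_injOn (fun x => w + x)
    · intro x hx
      simp only [Finset.coe_compl, Set.mem_compl_iff, Finset.mem_coe] at hx ⊢
      rwa [add_mem_perp_iff v w x hx]
    · intro a _ b _ h; exact add_left_cancel h

theorem perp_card (v : V n) (hv : v ≠ 0) : 2 * (perp v).card = 2 ^ n := by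
  have h := Finset.card_compl_add_card (perp v)
  rw [perp_compl_card v hv, V_card] at h
  omega

theorem subgroup_perp (hn : 0 < n) (H : AddSubgroup (V n)) (hH : Nat.card (V n) < 4 * Nat.card H) :
    ∃ v : V n, v ≠ 0 ∧ ∀ x ∈ perp v, x ∈ H := by
  by_cases hT : AddSubgroup.toZModSubmodule 2 H = ⊤
  · refine ⟨fun _ => 1, ?_, ?_⟩
    · intro h
      have := congrFun h ⟨0, hn⟩
      simp at this
    · intro x _
      have : x ∈ AddSubgroup.toZModSubmodule 2 H := by rw [hT]; trivial
      simpa using this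
  · obtain ⟨f, hf, hle⟩ := Submodule.exists_le_ker_of_lt_top _ (lt_top_iff_ne_top.2 hT)
    set v : V n := fun i => f (Pi.single i 1) with hv
    have hfv : ∀ x, f x = ∑ i, x i * v i := by
      intro x
      rw [LinearMap.pi_apply_eq_sum_univ f x]
      refine Finset.sum_congr rfl fun i _ => ?_
      rw [smul_eq_mul, hv]
      congr 2
      ext j
      simp [Pi.single_apply, eq_comm]
    have hv0 : v ≠ 0 := by
      intro h
      apply hf
      ext x
      simp [hfv, h]
    refine ⟨v, hv0, ?_⟩
    set K : AddSubgroup (V n) := (LinearMap.ker f).toAddSubgroup with hK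
    have hHK : H ≤ K := by
      intro x hx
      exact hle (by simpa using hx)
    have hKmem : ∀ x, x ∈ K ↔ x ∈ perp v := by
      intro x
      rw [mem_perp, ← hfv]; simp [hK]
    have hKc : Nat.card K = (perp v).card := by
      have : (K : Set (V n)) = ↑(perp v) := by
        ext x; exact hKmem x
      rw [← Set.ncard_coe_finset, ← this]; rfl
    have hdvd : Nat.card H ∣ Nat.card K := AddSubgroup.card_dvd_of_le hHK
    have hp := perp_card v hv0
    rw [Nat.card_eq_fintype_card, V_card] at hH
    have hpos : 0 < 2 ^ n := by positivity
    have heq : Nat.card K = Nat.card H := by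
      obtain ⟨c, hc⟩ := hdvd
      have : c < 2 := by
        by_contra hcon
        have : Nat.card H * 2 ≤ Nat.card H * c := Nat.mul_le_mul_left _ (by omega)
        omega
      interval_cases c <;> omega
    have : H = K := AddSubgroup.eq_of_le_of_card_ge hHK heq.le
    intro x hx
    rw [this, hKmem]; exact hx

/-- sumsets arising from a container that are rare -/
def badFam (D : Finset (V n)) (Q : ℕ) : Finset (Finset (V n)) :=
  ((Finset.univ.filter (fun t : V n => 512 * Q ≤ (shiftIn D t).card)).biUnion
      (fun t => (indSets D t).image (fun A => A + A))) ∪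
    ((if D.card < 3968 * Q then D.powerset.image (fun A => A + A) else ∅) ∪
    (if (antiP D (512 * Q)).card < 3968 * Q then
      (antiP D (512 * Q)).powerset.image (fun T => Tᶜ) else ∅))

theorem badFam_card (D : Finset (V n)) (Q : ℕ) (hD : D.card ≤ 4113 * Q) :
    (badFam D Q).card ≤ (2 ^ n + 2) * 2 ^ (4007 * Q) := by
  have h1 : ((Finset.univ.filter (fun t : V n => 512 * Q ≤ (shiftIn D t).card)).biUnion
      (fun t => (indSets D t).image (fun A => A + A))).card ≤ 2 ^ n * 2 ^ (4007 * Q) := by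
    refine (Finset.card_biUnion_le_card_mul _ _ (2 ^ (4007 * Q)) ?_).trans ?_
    · intro t ht
      simp only [Finset.mem_filter, Finset.mem_univ, true_and] at ht
      exact Finset.card_image_le.trans (ind_bound V_add_self D t Q hD ht)
    · apply Nat.mul_le_mul_right
      exact (Finset.card_le_univ _).trans V_card.le
  have h2 : (if D.card < 3968 * Q then D.powerset.image (fun A => A + A) else ∅).card
      ≤ 2 ^ (4007 * Q) := by
    split_ifs with h
    · refine Finset.card_image_le.trans ?_
      rw [Finset.card_powerset]
      exact Nat.pow_le_pow_right (by norm_num) (by omega)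
    · simp
  have h3 : (if (antiP D (512 * Q)).card < 3968 * Q then
      (antiP D (512 * Q)).powerset.image (fun T => Tᶜ) else ∅).card
      ≤ 2 ^ (4007 * Q) := by
    split_ifs with h
    · refine Finset.card_image_le.trans ?_
      rw [Finset.card_powerset]
      exact Nat.pow_le_pow_right (by norm_num) (by omega)
    · simp
  refine (Finset.card_union_le _ _).trans ?_
  have := Finset.card_union_le
    (if D.card < 3968 * Q then D.powerset.image (fun A => A + A) else ∅)
    (if (antiP D (512 * Q)).card < 3968 * Q then
      (antiP D (512 * Q)).powerset.image (fun T => Tᶜ) else ∅)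
  rw [add_mul]
  omega

theorem mem_badFam (hn : 0 < n) (Q : ℕ) (hQ : 0 < Q) (hN : Fintype.card (V n) = 8192 * Q)
    (D A : Finset (V n)) (hA : A ⊆ D) (hH : A + A ∉ Hfam n) : A + A ∈ badFam D Q := by
  by_contra hcon
  simp only [badFam, Finset.mem_union, not_or] at hcon
  obtain ⟨c1, c2, c3⟩ := hcon
  have hT : (A + A)ᶜ ⊆ antiP D (512 * Q) := by
    intro t ht
    by_contra h
    apply c1
    simp only [antiP, Finset.mem_filter, Finset.mem_univ, true_and, not_lt] at h
    simp only [Finset.mem_biUnion, Finset.mem_filter, Finset.mem_univ, true_and, Finset.mem_image]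
    refine ⟨t, h, A, ?_, rfl⟩
    simp only [indSets, Finset.mem_filter, Finset.mem_powerset]
    refine ⟨hA, ?_⟩
    intro a ha hat
    rw [Finset.mem_compl] at ht
    apply ht
    have : t = a + (a + t) := by rw [← add_assoc, V_add_self, zero_add]
    rw [this]
    exact Finset.add_mem_add ha hat
  have hD : 3968 * Q ≤ D.card := by
    by_contra h
    rw [if_pos (by omega)] at c2
    exact c2 (Finset.mem_image.2 ⟨A, Finset.mem_powerset.2 hA, rfl⟩)
  have hP : 3968 * Q ≤ (antiP D (512 * Q)).card := by
    by_contra h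
    rw [if_pos (by omega)] at c3
    exact c3 (Finset.mem_image.2 ⟨(A + A)ᶜ, Finset.mem_powerset.2 hT, compl_compl _⟩)
  obtain ⟨H, hHc, hHm⟩ := sum_subgroup V_add_self (antiP D (512 * Q)) (by omega)
  obtain ⟨v, hv, hvH⟩ := subgroup_perp hn H hHc
  apply hH
  simp only [Hfam, Finset.mem_filter, Finset.mem_univ, true_and]
  refine ⟨v, hv, ?_⟩
  intro x hx
  by_contra hxA
  have h1 := hT (Finset.mem_compl.2 hxA)
  obtain ⟨y, hy, z, hz, rfl⟩ := hHm x (hvH x hx)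
  exact near_period V_add_self D Q hN hD hQ y z hy hz h1

theorem sumsets_diff_card (hn : 0 < n) (Q : ℕ) (hQ : 2 ^ 20 ≤ Q)
    (hN : Fintype.card (V n) = 8192 * Q) :
    (sumsets n \ Hfam n).card ≤ (2 ^ n + 3) * 2 ^ (4059 * Q) := by
  obtain ⟨k, hk⟩ : ∃ k : ℕ, k = 1048576 := ⟨_, rfl⟩
  have hkQ : k ≤ Q := by rw [hk]; simpa using hQ
  set sm := (Finset.univ : Finset (Finset (V n))).filter (fun F => F.card ≤ Q) with hsm
  have hsmc : sm.card ≤ 2 ^ (26 * Q) := small_count Q hN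
  have hsub : sumsets n \ Hfam n ⊆ sm.image (fun T => Tᶜ) ∪
      ((sm.filter (fun T => T.card = k)) ×ˢ sm).biUnion (fun p => badFam (cont p.1 8192 p.2) Q) := by
    intro S hS
    obtain ⟨hS1, hS2⟩ := Finset.mem_sdiff.1 hS
    obtain ⟨A, -, rfl⟩ := Finset.mem_image.1 hS1
    rw [Finset.mem_union]
    by_cases hT : (A + A)ᶜ.card ≤ k
    · left
      exact Finset.mem_image.2 ⟨(A + A)ᶜ, by simp [hsm, hT.trans hkQ], compl_compl _⟩
    · right
      obtain ⟨T, hTs, hTc⟩ := Finset.exists_subset_card_eq (not_le.1 hT).le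
      obtain ⟨F, hF, hAF⟩ := container_exists V_add_self T 8192 A (by
        intro a ha b hb hab
        exact Finset.mem_compl.1 (hTs hab) (Finset.add_mem_add ha hb))
      rw [Finset.mem_biUnion]
      refine ⟨(T, F), ?_, mem_badFam hn Q (by omega) hN _ A hAF hS2⟩
      simp only [Finset.mem_product, Finset.mem_filter, hsm, Finset.mem_univ, true_and]
      omega
  have hbi : (((sm.filter (fun T => T.card = k)) ×ˢ sm).biUnion
      (fun p => badFam (cont p.1 8192 p.2) Q)).card ≤
      (2 ^ (26 * Q) * 2 ^ (26 * Q)) * ((2 ^ n + 2) * 2 ^ (4007 * Q)) := by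
    refine (Finset.card_biUnion_le_card_mul _ _ ((2 ^ n + 2) * 2 ^ (4007 * Q)) ?_).trans ?_
    · rintro ⟨T, F⟩ hp
      simp only [Finset.mem_product, Finset.mem_filter] at hp
      apply badFam_card
      have h := cont_card T 8192 F
      rw [hp.1.2, hN, hk] at h
      dsimp only
      omega
    · apply Nat.mul_le_mul_right
      rw [Finset.card_product]
      exact Nat.mul_le_mul ((Finset.card_le_card (Finset.filter_subset _ _)).trans hsmc) hsmc
  calc _ ≤ _ := Finset.card_le_card hsub
    _ ≤ _ := Finset.card_union_le _ _
    _ ≤ 2 ^ (26 * Q) + (2 ^ (26 * Q) * 2 ^ (26 * Q)) * ((2 ^ n + 2) * 2 ^ (4007 * Q)) :=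
      Nat.add_le_add (Finset.card_image_le.trans hsmc) hbi
    _ = 2 ^ (26 * Q) + (2 ^ n + 2) * 2 ^ (4059 * Q) := by
      rw [show 4059 * Q = 26 * Q + 26 * Q + 4007 * Q by ring, pow_add, pow_add]; ring
    _ ≤ 2 ^ (4059 * Q) + (2 ^ n + 2) * 2 ^ (4059 * Q) :=
      Nat.add_le_add_right (Nat.pow_le_pow_right (by norm_num) (by omega)) _
    _ = _ := by ring

theorem Hfam_diff_card (Q : ℕ) (hN : Fintype.card (V n) = 8192 * Q) :
    (Hfam n \ sumsets n).card ≤ (2 ^ n * 2 ^ n) * 2 ^ (4059 * Q) := by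
  have hsub : Hfam n \ sumsets n ⊆
      ((Finset.univ.filter (fun v : V n => v ≠ 0)).sigma (fun v => perp v)).biUnion
        (fun p => (indSets (perp p.1)ᶜ p.2).image (fun B => perp p.1 ∪ B)) := by
    intro S hS
    obtain ⟨hS1, hS2⟩ := Finset.mem_sdiff.1 hS
    simp only [Hfam, Finset.mem_filter, Finset.mem_univ, true_and] at hS1
    obtain ⟨v, hv, hvS⟩ := hS1
    have hex : ∃ x ∈ perp v, ∀ a ∈ S \ perp v, a + x ∉ S \ perp v := by
      by_contra hcon
      push Not at hcon
      apply hS2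
      rw [sumsets, Finset.mem_image]
      refine ⟨insert 0 (S \ perp v), Finset.mem_univ _, ?_⟩
      ext y
      constructor
      · intro hy
        obtain ⟨a, ha, b, hb, rfl⟩ := Finset.mem_add.1 hy
        have h0 : (0 : V n) ∈ S := hvS (by rw [mem_perp]; simp)
        rw [Finset.mem_insert, Finset.mem_sdiff] at ha hb
        rcases ha with rfl | ha
        · rcases hb with rfl | hb
          · simpa using h0
          · simpa using hb.1
        · rcases hb with rfl | hb
          · simpa using ha.1
          · exact hvS (add_mem_perp_of_not v a b ha.2 hb.2)
      · intro hy
        by_cases hyv : y ∈ perp v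
        · obtain ⟨a, ha, hay⟩ := hcon y hyv
          have : y = a + (a + y) := by rw [← add_assoc, V_add_self, zero_add]
          rw [this]
          exact Finset.add_mem_add (Finset.mem_insert_of_mem ha) (Finset.mem_insert_of_mem hay)
        · rw [← zero_add y]
          exact Finset.add_mem_add (Finset.mem_insert_self _ _)
            (Finset.mem_insert_of_mem (Finset.mem_sdiff.2 ⟨hy, hyv⟩))
    obtain ⟨x, hx, hxS⟩ := hex
    rw [Finset.mem_biUnion]
    refine ⟨⟨v, x⟩, by simp [hv, hx], ?_⟩
    rw [Finset.mem_image]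
    refine ⟨S \ perp v, ?_, Finset.union_sdiff_of_subset hvS⟩
    simp only [indSets, Finset.mem_filter, Finset.mem_powerset]
    refine ⟨?_, hxS⟩
    intro a ha
    exact Finset.mem_compl.2 (Finset.mem_sdiff.1 ha).2
  refine (Finset.card_le_card hsub).trans
    ((Finset.card_biUnion_le_card_mul _ _ (2 ^ (4059 * Q)) ?_).trans ?_)
  · rintro ⟨v, x⟩ hp
    simp only [Finset.mem_sigma, Finset.mem_filter, Finset.mem_univ, true_and] at hp
    refine Finset.card_image_le.trans ?_
    have h1 := perp_compl_card v hp.1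
    have h2 := perp_card v hp.1
    rw [V_card] at hN
    have h3 : shiftIn (perp v)ᶜ x = (perp v)ᶜ := by
      apply Finset.filter_true_of_mem
      intro a ha
      rw [Finset.mem_compl] at ha ⊢
      rwa [add_mem_perp_iff v a x hp.2]
    refine (ind_bound V_add_self _ x Q ?_ ?_).trans (Nat.pow_le_pow_right (by norm_num) (by omega))
    · dsimp only; omega
    · dsimp only; rw [h3]; omega
  · apply Nat.mul_le_mul_right
    rw [Finset.card_sigma]
    calc _ ≤ ∑ v ∈ (Finset.univ.filter (fun v : V n => v ≠ 0)), 2 ^ n := by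
          apply Finset.sum_le_sum
          intro v _
          exact (Finset.card_le_univ _).trans V_card.le
      _ ≤ _ := by
        rw [Finset.sum_const, smul_eq_mul]
        apply Nat.mul_le_mul_right
        exact (Finset.card_le_univ _).trans V_card.le

theorem Hfam_card (hn : 0 < n) (Q : ℕ) (hN : Fintype.card (V n) = 8192 * Q) :
    2 ^ (4096 * Q) ≤ (Hfam n).card := by
  obtain ⟨v, hv⟩ : ∃ v : V n, v ≠ 0 := by
    refine ⟨fun _ => 1, fun h => ?_⟩
    have := congrFun h ⟨0, hn⟩
    simp at this
  have h1 := perp_compl_card v hv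
  have h2 := perp_card v hv
  rw [V_card] at hN
  have h3 : (perp v)ᶜ.powerset.card = 2 ^ (4096 * Q) := by
    rw [Finset.card_powerset]; congr 1; omega
  rw [← h3]
  apply Finset.card_le_card_of_injOn (fun B => perp v ∪ B)
  · intro B _
    simp only [Hfam, Finset.coe_filter, Finset.mem_univ, true_and, Set.mem_ofPred_eq]
    exact ⟨v, hv, Finset.subset_union_left⟩
  · intro B hB C hC h
    have key : ∀ B : Finset (V n), B ∈ (perp v)ᶜ.powerset → (perp v ∪ B) \ perp v = B := by
      intro B hB
      rw [Finset.mem_powerset] at hB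
      ext x
      have := @hB x
      simp only [Finset.mem_sdiff, Finset.mem_union, Finset.mem_compl] at this ⊢
      tauto
    rw [← key B hB, ← key C hC]
    exact congrArg (· \ perp v) h

end AuxV

/-- `|𝒮ₙ Δ ℋₙ| = o(|𝒮ₙ|)`. -/
theorem symmDiff_sumsets_Hfam_small :
    ∀ ε : ℝ, 0 < ε → ∃ n₀ : ℕ, ∀ n : ℕ, n₀ ≤ n →
      (((sumsets n \ Hfam n) ∪ (Hfam n \ sumsets n)).card : ℝ) ≤ ε * (sumsets n).card := by
  intro ε hε
  obtain ⟨m, hm⟩ := exists_nat_gt ((2 + ε) / ε)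
  refine ⟨m + 33, fun n hn => ?_⟩
  obtain ⟨Q, hQ⟩ : ∃ Q, Q = 2 ^ (n - 13) := ⟨_, rfl⟩
  have hN' : 2 ^ n = 8192 * Q := by
    rw [hQ, show (8192 : ℕ) = 2 ^ 13 by norm_num, ← pow_add]; congr 1; omega
  have hN : Fintype.card (V n) = 8192 * Q := by rw [V_card, hN']
  have hQ20 : 2 ^ 20 ≤ Q := by rw [hQ]; exact Nat.pow_le_pow_right (by norm_num) (by omega)
  have hmQ : m ≤ Q := by
    rw [hQ]; exact (show m ≤ n - 13 by omega).trans Nat.lt_two_pow_self.le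
  have h1 := sumsets_diff_card (by omega) Q hQ20 hN
  have h2 := Hfam_diff_card Q hN
  have h3 := Hfam_card (by omega) Q hN
  rw [hN'] at h1 h2
  have h4 : (Hfam n).card ≤ (Hfam n \ sumsets n).card + (sumsets n).card := by
    refine (Finset.card_le_card ?_).trans (Finset.card_union_le _ _)
    intro x hx
    by_cases h : x ∈ sumsets n <;> simp [h, hx]
  have h5 := Finset.card_union_le (sumsets n \ Hfam n) (Hfam n \ sumsets n)
  obtain ⟨E, hE⟩ : ∃ E, E = (8192 * Q + 2) ^ 2 * 2 ^ (4059 * Q) := ⟨_, rfl⟩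
  have e1 : (sumsets n \ Hfam n).card ≤ E := by
    refine h1.trans ?_
    rw [hE]; apply Nat.mul_le_mul_right; nlinarith
  have e2 : (Hfam n \ sumsets n).card ≤ E := by
    refine h2.trans ?_
    rw [hE]; apply Nat.mul_le_mul_right; nlinarith
  have e3 : m * E ≤ 2 ^ (4096 * Q) := by
    have hq : Q ≤ 2 ^ Q := Nat.lt_two_pow_self.le
    have hq1 : 20 ≤ Q := le_trans (by norm_num) hQ20
    have a1 : 8192 * Q + 2 ≤ 2 ^ 14 * 2 ^ Q := by omega
    calc m * E ≤ 2 ^ Q * ((2 ^ 14 * 2 ^ Q) ^ 2 * 2 ^ (4059 * Q)) := by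
          rw [hE]
          exact Nat.mul_le_mul (hmQ.trans hq) (Nat.mul_le_mul_right _ (Nat.pow_le_pow_left a1 2))
      _ = 2 ^ (28 + 4062 * Q) := by
          rw [mul_pow, ← pow_mul, ← pow_mul, ← pow_add, ← pow_add, ← pow_add]; ring_nf
      _ ≤ _ := Nat.pow_le_pow_right (by norm_num) (by omega)
  obtain ⟨P, hP⟩ : ∃ P, P = 2 ^ (4096 * Q) := ⟨_, rfl⟩
  rw [← hP] at e3 h3
  have f1 : (((sumsets n \ Hfam n) ∪ (Hfam n \ sumsets n)).card : ℝ) ≤ 2 * E := by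
    exact_mod_cast (by omega : ((sumsets n \ Hfam n) ∪ (Hfam n \ sumsets n)).card ≤ 2 * E)
  have f2 : (P : ℝ) ≤ E + (sumsets n).card := by
    exact_mod_cast (by omega : P ≤ E + (sumsets n).card)
  have f3 : (m : ℝ) * E ≤ P := by exact_mod_cast e3
  have f4 : 2 + ε ≤ m * ε := ((div_lt_iff₀ hε).1 hm).le
  have f5 : (0 : ℝ) ≤ E := Nat.cast_nonneg _
  have f6 : (2 + ε) * E ≤ ε * P :=
    calc (2 + ε) * E ≤ m * ε * E := mul_le_mul_of_nonneg_right f4 f5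
      _ = ε * (m * E) := by ring
      _ ≤ ε * P := mul_le_mul_of_nonneg_left f3 hε.le
  have f7 := mul_le_mul_of_nonneg_left f2 hε.le
  linarith
end

section
/- For all n ≥ 1, the number of sumsets in F₂ⁿ satisfies |𝒮ₙ| ≥ 2^(2^(n−1)). -/
open Pointwise

theorem mem_aux (m : ℕ) (B : Finset (V m)) (v : V m) :
    (Fin.cons 1 v : V (m+1)) ∈
      (insert 0 (B.image (fun w => (Fin.cons 1 w : V (m+1)))) +
       insert 0 (B.image (fun w => (Fin.cons 1 w : V (m+1)))) : Finset (V (m+1))) ↔ v ∈ B := by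
  have hinj : ∀ a b : V m, (Fin.cons 1 a : V (m+1)) = Fin.cons 1 b → a = b :=
    fun a b h => (Fin.cons_inj.1 h).2
  constructor
  · intro h
    obtain ⟨a, ha, b, hb, hab⟩ := Finset.mem_add.1 h
    rw [Finset.mem_insert, Finset.mem_image] at ha hb
    have h0 := congrFun hab 0
    rcases ha with rfl | ⟨a, ha, rfl⟩ <;> rcases hb with rfl | ⟨b, hb, rfl⟩
    · simp at h0
    · rw [zero_add] at hab
      exact hinj _ _ hab ▸ hb
    · rw [add_zero] at hab
      exact hinj _ _ hab ▸ ha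
    · simp only [Pi.add_apply, Fin.cons_zero] at h0
      exact absurd h0 (by decide)
  · intro h
    refine Finset.mem_add.2 ⟨0, Finset.mem_insert_self _ _, _,
      Finset.mem_insert_of_mem (Finset.mem_image_of_mem _ h), zero_add _⟩

/-- `|𝒮ₙ| ≥ 2^(2^(n−1))` for all `n ≥ 1`. -/
theorem sumset_count_lower (n : ℕ) (hn : 1 ≤ n) :
    2 ^ 2 ^ (n - 1) ≤ (sumsets n).card := by
  obtain ⟨m, rfl⟩ : ∃ m, n = m + 1 := ⟨n - 1, by omega⟩
  have hc : (Finset.univ : Finset (Finset (V m))).card = 2 ^ 2 ^ m := by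
    simp
  rw [Nat.add_sub_cancel, ← hc]
  refine Finset.card_le_card_of_injOn
    (fun B => insert 0 (B.image (fun w => (Fin.cons 1 w : V (m+1)))) +
       insert 0 (B.image (fun w => (Fin.cons 1 w : V (m+1))))) ?_ ?_
  · intro B _
    exact Finset.mem_coe.2 (Finset.mem_image_of_mem (fun A : Finset (V (m+1)) => A + A)
      (Finset.mem_univ _))
  · intro B _ C _ h
    ext v
    rw [← mem_aux m B v, ← mem_aux m C v]
    exact iff_of_eq (congrArg (fun S => (Fin.cons 1 v : V (m+1)) ∈ S) h)
end

section
/- For all n ≥ 2, the family ℋₙ satisfies (2ⁿ−1)·2^(2^(n−1)) − 2^(2n−1+2^(n−2)) ≤ |ℋₙ| ≤ (2ⁿ−1)·2^(2^(n−1)). In particular, |ℋₙ| ~ (2ⁿ−1)·2^(2^(n−1)). -/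
def Cset {n : ℕ} (v : V n) : Finset (V n) :=
  Finset.univ.filter (fun x => ∑ i, x i * v i = 1)

lemma zmod2_cases (a : ZMod 2) : a = 0 ∨ a = 1 := by
  revert a; decide

lemma perp_compl {n : ℕ} (v : V n) : (perp v)ᶜ = Cset v := by
  ext x
  simp only [perp, Cset, Finset.mem_compl, Finset.mem_filter, Finset.mem_univ, true_and]
  rcases zmod2_cases (∑ i, x i * v i) with h | h <;> rw [h] <;> decide

lemma exists_dot {n : ℕ} (v : V n) (hv : v ≠ 0) : ∃ e : V n, ∑ i, e i * v i = 1 := by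
  obtain ⟨i, hi⟩ := Function.ne_iff.mp hv
  refine ⟨Pi.single i 1, ?_⟩
  have h1 : v i = 1 := (zmod2_cases (v i)).resolve_left hi
  simp [Pi.single_apply, h1]

lemma card_V (n : ℕ) : Fintype.card (V n) = 2 ^ n := by
  simp [V, ZMod.card]

lemma two_card_Cset {n : ℕ} (v : V n) (hv : v ≠ 0) : 2 * (Cset v).card = 2 ^ n := by
  obtain ⟨e, he⟩ := exists_dot v hv
  have h : (Cset v).card = (perp v).card := by
    apply Finset.card_bij' (fun x _ => x + e) (fun x _ => x - e)
    · intro x hx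
      simp only [perp, Cset, Finset.mem_filter, Finset.mem_univ, true_and] at hx ⊢
      simp only [Pi.add_apply, add_mul, Finset.sum_add_distrib, he, hx]
      decide
    · intro x hx
      simp only [perp, Cset, Finset.mem_filter, Finset.mem_univ, true_and] at hx ⊢
      simp only [Pi.sub_apply, sub_mul, Finset.sum_sub_distrib, he, hx]
      decide
    · intro x _; simp
    · intro x _; simp
  have h2 := Finset.card_add_card_compl (perp v)
  rw [perp_compl, card_V] at h2
  omega

lemma card_Cset {n : ℕ} (hn : 2 ≤ n) (v : V n) (hv : v ≠ 0) :
    (Cset v).card = 2 ^ (n - 1) := by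
  have h := two_card_Cset v hv
  have h8 : 2 ^ n = 2 * 2 ^ (n - 1) := by
    rw [← pow_succ']; congr 1; omega
  omega

lemma card_Cset_inter {n : ℕ} (hn : 2 ≤ n) (v w : V n) (hv : v ≠ 0) (hw : w ≠ 0)
    (hvw : v ≠ w) : (Cset v ∩ Cset w).card = 2 ^ (n - 2) := by
  have hs : v - w ≠ 0 := sub_ne_zero.mpr hvw
  have h1 := card_Cset hn v hv
  have h2 := card_Cset hn w hw
  have h3 := card_Cset hn _ hs
  have h4 : Cset (v - w) = (Cset v \ Cset w) ∪ (Cset w \ Cset v) := by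
    ext x
    simp only [Cset, Finset.mem_union, Finset.mem_sdiff, Finset.mem_filter, Finset.mem_univ,
      true_and, Pi.sub_apply, mul_sub, Finset.sum_sub_distrib]
    generalize ∑ i, x i * v i = a
    generalize ∑ i, x i * w i = b
    revert a b; decide
  have h5 : Disjoint (Cset v \ Cset w) (Cset w \ Cset v) := disjoint_sdiff_sdiff
  rw [h4, Finset.card_union_of_disjoint h5] at h3
  have h6 := Finset.card_inter_add_card_sdiff (Cset v) (Cset w)
  have h7 := Finset.card_inter_add_card_sdiff (Cset w) (Cset v)
  rw [Finset.inter_comm] at h7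
  have h8 : 2 ^ (n - 1) = 2 * 2 ^ (n - 2) := by
    rw [← pow_succ']; congr 1; omega
  omega

lemma card_supersets {n : ℕ} (T : Finset (V n)) :
    (Finset.univ.filter (fun S => T ⊆ S)).card = 2 ^ (Tᶜ).card := by
  have : Finset.univ.filter (fun S => T ⊆ S) = Finset.Icc T Finset.univ := by
    ext S; simp
  rw [this, Finset.card_Icc_finset (Finset.subset_univ _), Finset.card_compl, Finset.card_univ]

/-- nonzero vectors -/
def NZ (n : ℕ) : Finset (V n) := Finset.univ.erase 0

lemma card_NZ (n : ℕ) : (NZ n).card = 2 ^ n - 1 := by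
  rw [NZ, Finset.card_erase_of_mem (Finset.mem_univ _), Finset.card_univ, card_V]

lemma sum_k {n : ℕ} (hn : 2 ≤ n) :
    ∑ S : Finset (V n), ((NZ n).filter (fun v => perp v ⊆ S)).card
      = (2 ^ n - 1) * 2 ^ 2 ^ (n - 1) := by
  have := Finset.sum_card_bipartiteAbove_eq_sum_card_bipartiteBelow
    (s := NZ n) (t := (Finset.univ : Finset (Finset (V n)))) (fun v S => perp v ⊆ S)
  simp only [Finset.bipartiteAbove, Finset.bipartiteBelow] at this
  rw [← this, Finset.sum_congr rfl (g := fun _ => 2 ^ 2 ^ (n - 1)), Finset.sum_const, card_NZ,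
    smul_eq_mul]
  intro v hv
  rw [card_supersets, perp_compl, card_Cset hn v (Finset.ne_of_mem_erase hv)]

lemma sum_kk {n : ℕ} (hn : 2 ≤ n) :
    ∑ S : Finset (V n), ((NZ n).filter (fun v => perp v ⊆ S)).offDiag.card
      = (NZ n).offDiag.card * 2 ^ 2 ^ (n - 2) := by
  have := Finset.sum_card_bipartiteAbove_eq_sum_card_bipartiteBelow
    (s := (NZ n).offDiag) (t := (Finset.univ : Finset (Finset (V n))))
    (fun p S => perp p.1 ∪ perp p.2 ⊆ S)
  simp only [Finset.bipartiteAbove, Finset.bipartiteBelow] at this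
  have e : ∀ S : Finset (V n), ((NZ n).filter (fun v => perp v ⊆ S)).offDiag
      = (NZ n).offDiag.filter (fun p => perp p.1 ∪ perp p.2 ⊆ S) := by
    intro S; ext p
    simp only [Finset.mem_offDiag, Finset.mem_filter, Finset.union_subset_iff]
    tauto
  simp only [e]
  rw [← this, Finset.sum_congr rfl (g := fun _ => 2 ^ 2 ^ (n - 2)), Finset.sum_const,
    smul_eq_mul]
  intro p hp
  obtain ⟨ha, hb, hab⟩ := Finset.mem_offDiag.mp hp
  rw [card_supersets, Finset.compl_union, perp_compl, perp_compl,
    card_Cset_inter hn _ _ (Finset.ne_of_mem_erase ha) (Finset.ne_of_mem_erase hb) hab]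

lemma Hfam_card_eq (n : ℕ) : (Hfam n).card =
    ∑ S : Finset (V n), if ((NZ n).filter (fun v => perp v ⊆ S)).card = 0 then 0 else 1 := by
  rw [Hfam, Finset.card_filter]
  apply Finset.sum_congr rfl
  intro S _
  have : (∃ v : V n, v ≠ 0 ∧ perp v ⊆ S) ↔
      ¬ ((NZ n).filter (fun v => perp v ⊆ S)).card = 0 := by
    rw [Finset.card_eq_zero, ← ne_eq, ← Finset.nonempty_iff_ne_empty]
    simp [Finset.Nonempty, NZ]
  by_cases h : ((NZ n).filter (fun v => perp v ⊆ S)).card = 0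
  · rw [if_neg (by rw [this]; exact not_not.mpr h), if_pos h]
  · rw [if_pos (this.mpr h), if_neg h]

lemma Hfam_upper {n : ℕ} (hn : 2 ≤ n) : (Hfam n).card ≤ (2 ^ n - 1) * 2 ^ 2 ^ (n - 1) := by
  rw [← sum_k hn, Hfam_card_eq]
  apply Finset.sum_le_sum
  intro S _
  split_ifs <;> omega

lemma Hfam_lower {n : ℕ} (hn : 2 ≤ n) :
    (2 ^ n - 1) * 2 ^ 2 ^ (n - 1) ≤ (Hfam n).card + 2 ^ (2 * n - 1 + 2 ^ (n - 2)) := by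
  have key : 2 * ((2 ^ n - 1) * 2 ^ 2 ^ (n - 1)) ≤
      2 * (Hfam n).card + (NZ n).offDiag.card * 2 ^ 2 ^ (n - 2) := by
    rw [← sum_k hn, ← sum_kk hn, Hfam_card_eq, Finset.mul_sum, Finset.mul_sum,
      ← Finset.sum_add_distrib]
    apply Finset.sum_le_sum
    intro S _
    rw [Finset.offDiag_card]
    generalize ((NZ n).filter (fun v => perp v ⊆ S)).card = k
    rcases k with _ | _ | k
    · simp
    · simp
    · have : (k + 1 + 1) * (k + 1 + 1) - (k + 1 + 1) = (k + 2) * (k + 1) := by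
        rw [Nat.sub_eq_iff_eq_add (by nlinarith)]; ring
      simp only [this]
      rw [if_neg (by omega)]
      nlinarith
  have h2 : (NZ n).offDiag.card ≤ 2 * 2 ^ (2 * n - 1) := by
    rw [Finset.offDiag_card, card_NZ, ← pow_succ', show 2 * n - 1 + 1 = n + n by omega, pow_add]
    exact (Nat.sub_le _ _).trans (Nat.mul_le_mul (Nat.sub_le _ _) (Nat.sub_le _ _))
  have h3 := Nat.mul_le_mul_right (2 ^ 2 ^ (n - 2)) h2
  rw [mul_assoc, ← pow_add] at h3
  omega

lemma aux_pow (m : ℕ) (hm : 3 ≤ m) : 2 * m + 2 ≤ 2 ^ m := by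
  induction m, hm using Nat.le_induction with
  | base => norm_num
  | succ k hk ih => rw [pow_succ]; omega

theorem Hfam_card_bounds :
    (∀ n : ℕ, 2 ≤ n →
      ((2 : ℝ) ^ n - 1) * 2 ^ 2 ^ (n - 1) - 2 ^ (2 * n - 1 + 2 ^ (n - 2)) ≤
        ((Hfam n).card : ℝ) ∧
      ((Hfam n).card : ℝ) ≤ ((2 : ℝ) ^ n - 1) * 2 ^ 2 ^ (n - 1)) ∧
    (∀ ε : ℝ, 0 < ε → ∃ n₀ : ℕ, ∀ n : ℕ, n₀ ≤ n →
      (1 - ε) * (((2 : ℝ) ^ n - 1) * 2 ^ 2 ^ (n - 1)) ≤ ((Hfam n).card : ℝ) ∧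
      ((Hfam n).card : ℝ) ≤ (1 + ε) * (((2 : ℝ) ^ n - 1) * 2 ^ 2 ^ (n - 1))) := by
  have main : ∀ n : ℕ, 2 ≤ n →
      ((2 : ℝ) ^ n - 1) * 2 ^ 2 ^ (n - 1) - 2 ^ (2 * n - 1 + 2 ^ (n - 2)) ≤
        ((Hfam n).card : ℝ) ∧
      ((Hfam n).card : ℝ) ≤ ((2 : ℝ) ^ n - 1) * 2 ^ 2 ^ (n - 1) := by
    intro n hn
    have hc : (((2 ^ n - 1 : ℕ)) : ℝ) = (2 : ℝ) ^ n - 1 := by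
      rw [Nat.cast_sub Nat.one_le_two_pow]; simp
    have hl : (((2 ^ n - 1 : ℕ) * 2 ^ 2 ^ (n - 1) : ℕ) : ℝ) ≤
      (((Hfam n).card + 2 ^ (2 * n - 1 + 2 ^ (n - 2)) : ℕ) : ℝ) := Nat.cast_le.mpr (Hfam_lower hn)
    have hu : ((Hfam n).card : ℝ) ≤ (((2 ^ n - 1 : ℕ) * 2 ^ 2 ^ (n - 1) : ℕ) : ℝ) :=
      Nat.cast_le.mpr (Hfam_upper hn)
    rw [Nat.cast_mul, hc, Nat.cast_pow, Nat.cast_ofNat] at hl hu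
    rw [Nat.cast_add, Nat.cast_pow, Nat.cast_ofNat] at hl
    exact ⟨by linarith, hu⟩
  refine ⟨main, ?_⟩
  intro ε hε
  obtain ⟨N, hN⟩ := exists_nat_gt (1 / ε)
  refine ⟨N + 5, fun n hn => ?_⟩
  obtain ⟨h1, h2⟩ := main n (by omega)
  obtain ⟨m, rfl⟩ : ∃ m, n = m + 2 := ⟨n - 2, by omega⟩
  have hm : N ≤ m := by omega
  have hm3 : 3 ≤ m := by omega
  have hpos : (0 : ℝ) ≤ ((2 : ℝ) ^ (m + 2) - 1) * 2 ^ 2 ^ (m + 2 - 1) := by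
    have : (1 : ℝ) ≤ 2 ^ (m + 2) := one_le_pow₀ (by norm_num)
    have : (0 : ℝ) ≤ (2 : ℝ) ^ (m + 2) - 1 := by linarith
    positivity
  have hbound : (2 : ℝ) ^ (2 * (m + 2) - 1 + 2 ^ (m + 2 - 2)) ≤
      ε * (((2 : ℝ) ^ (m + 2) - 1) * 2 ^ 2 ^ (m + 2 - 1)) := by
    have a1 : (1 : ℝ) ≤ ε * 2 ^ m := by
      have b1 : (m : ℝ) ≤ 2 ^ m := by exact_mod_cast Nat.lt_two_pow_self.le
      have b2 : (N : ℝ) ≤ m := by exact_mod_cast hm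
      have b3 : 1 / ε ≤ 2 ^ m := by linarith
      rw [div_le_iff₀ hε] at b3
      linarith
    have a2 : (2 : ℝ) ^ (2 * m + 2) ≤ 2 ^ 2 ^ m :=
      pow_le_pow_right₀ (by norm_num) (aux_pow m hm3)
    have a3 : (2 : ℝ) ^ (m + 1) ≤ 2 ^ (m + 2) - 1 := by
      have : (1 : ℝ) ≤ 2 ^ (m + 1) := one_le_pow₀ (by norm_num)
      rw [pow_succ _ (m + 1)]; linarith
    rw [show 2 * (m + 2) - 1 + 2 ^ (m + 2 - 2) = (m + 1) + (m + 2) + 2 ^ m by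
      rw [show m + 2 - 2 = m by omega]; omega,
      show m + 2 - 1 = m + 1 by omega, pow_succ 2 m, mul_two, pow_add _ (2 ^ m) (2 ^ m)]
    rw [pow_add, pow_add _ (m + 1)]
    have a4 : (2 : ℝ) ^ (m + 2) ≤ ε * 2 ^ 2 ^ m := by
      calc (2 : ℝ) ^ (m + 2) ≤ (ε * 2 ^ m) * 2 ^ (m + 2) :=
            le_mul_of_one_le_left (by positivity) a1
        _ = ε * 2 ^ (2 * m + 2) := by ring
        _ ≤ _ := by gcongr
    calc (2 : ℝ) ^ (m + 1) * 2 ^ (m + 2) * 2 ^ 2 ^ m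
        ≤ (2 ^ (m + 2) - 1) * (ε * 2 ^ 2 ^ m) * 2 ^ 2 ^ m := by
          gcongr
          exact (by positivity : (0 : ℝ) ≤ 2 ^ (m + 1)).trans a3
      _ = _ := by ring
  constructor
  · linarith
  · have := mul_nonneg hε.le hpos
    linarith
end

section
/- For all n ≥ 1, the number of subsets A ⊆ F₂ⁿ for which A+A ≠ F₂ⁿ is at most 2ⁿ · 3^(2^(n−1)). -/
open Pointwise

theorem count_aux (m : ℕ) (x : V (m+1)) :
    (Finset.univ.filter (fun A : Finset (V (m+1)) => x ∉ A + A)).card ≤ 3 ^ 2 ^ m := by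
  classical
  by_cases hx : x = 0
  · have : (Finset.univ.filter (fun A : Finset (V (m+1)) => x ∉ A + A)) ⊆ {∅} := by
      intro A hA
      simp only [Finset.mem_filter, Finset.mem_univ, true_and] at hA
      rw [Finset.mem_singleton, Finset.eq_empty_iff_forall_notMem]
      intro v hv
      apply hA
      rw [Finset.mem_add]
      exact ⟨v, hv, v, hv, by rw [hx]; exact CharTwo.add_self_eq_zero v⟩
    calc _ ≤ _ := Finset.card_le_card this
      _ = 1 := by simp
      _ ≤ _ := Nat.one_le_pow _ _ (by norm_num)
  obtain ⟨i, hi⟩ : ∃ i, x i ≠ 0 := by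
    by_contra! h
    exact hx (funext h)
  have z : ∀ a : ZMod 2, a ≠ 0 → a = 1 := by decide
  have hi1 := z _ hi
  have hxx : x + x = 0 := CharTwo.add_self_eq_zero x
  let f : Finset (V (m+1)) → (V m → Fin 3) := fun A w =>
    if (i.insertNth 0 w : V (m+1)) ∈ A then 1
    else if (i.insertNth 0 w : V (m+1)) + x ∈ A then 2 else 0
  have key : ∀ v : V (m+1), v i = 0 → (i.insertNth 0 (i.removeNth v) : V (m+1)) = v := by
    intro v hv
    rw [← hv]
    exact Fin.insertNth_self_removeNth i v
  have hf1 : ∀ A : Finset (V (m+1)), ∀ v : V (m+1), v i = 0 →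
      (v ∈ A ↔ f A (i.removeNth v) = 1) := by
    intro A v hv
    simp only [f, key v hv]
    split_ifs <;> simp_all
  have hf2 : ∀ A : Finset (V (m+1)), x ∉ A + A → ∀ v : V (m+1), v i ≠ 0 →
      (v ∈ A ↔ f A (i.removeNth (v + x)) = 2) := by
    intro A hA v hv
    have h0 : (v + x) i = 0 := by
      rw [Pi.add_apply, z _ hv, hi1]; decide
    have h1 : v + x + x = v := by rw [add_assoc, hxx, add_zero]
    have h2 : ¬ (v ∈ A ∧ v + x ∈ A) := by
      rintro ⟨ha, hb⟩
      apply hA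
      rw [Finset.mem_add]
      exact ⟨v, ha, v + x, hb, by rw [← add_assoc, CharTwo.add_self_eq_zero v, zero_add]⟩
    simp only [f, key _ h0, h1]
    split_ifs <;> simp_all
  have hc : (Finset.univ : Finset (V m → Fin 3)).card = 3 ^ 2 ^ m := by
    simp [ZMod.card]
  rw [← hc]
  refine Finset.card_le_card_of_injOn f (fun _ _ => Finset.mem_univ _) ?_
  intro A hA B hB hAB
  simp only [Finset.coe_filter, Finset.mem_univ, true_and, Set.mem_setOf_eq] at hA hB
  ext v
  by_cases hv : v i = 0
  · rw [hf1 A v hv, hf1 B v hv, hAB]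
  · rw [hf2 A hA v hv, hf2 B hB v hv, hAB]

theorem count_incomplete_sumsets (n : ℕ) (hn : 1 ≤ n) :
    (Finset.univ.filter
        (fun A : Finset (V n) => A + A ≠ Finset.univ)).card ≤
      2 ^ n * 3 ^ 2 ^ (n - 1) := by
  classical
  obtain ⟨m, rfl⟩ : ∃ m, n = m + 1 := ⟨n - 1, by omega⟩
  rw [Nat.add_sub_cancel]
  have hsub : (Finset.univ.filter (fun A : Finset (V (m+1)) => A + A ≠ Finset.univ)) ⊆
      (Finset.univ : Finset (V (m+1))).biUnion
        (fun x => Finset.univ.filter (fun A : Finset (V (m+1)) => x ∉ A + A)) := by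
    intro A hA
    simp only [Finset.mem_filter, Finset.mem_univ, true_and, ne_eq,
      Finset.eq_univ_iff_forall, not_forall] at hA
    simpa only [Finset.mem_biUnion, Finset.mem_filter, Finset.mem_univ, true_and] using hA
  refine (Finset.card_le_card hsub).trans ?_
  refine (Finset.card_biUnion_le_card_mul _ _ _ (fun x _ => count_aux m x)).trans ?_
  simp [ZMod.card]
end
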